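/- Let R = x^32 - 4x^31 - 62x^30 + 558x^29 - 248x^28 - 23560x^27 + 143499x^26 + 59489x^25 - 4280108x^24 + 17190864x^23 + 12517459x^22 - 344750256x^21 + 1225662500x^20 - 278789479x^19 - 14790203106x^18 + 64357190741x^17 - 83774789980x^16 - 406418167694x^15 + 2480836111912x^14 - 5273524311353x^13 - 3257558862543x^12 + 54285321863574x^11 - 162450534558477x^10 + 197719989210108x^9 + 250865100757790x^8 - 1714511602191278x^7 + 4206562171750919x^6 - 6661579151098950x^5 + 7460752526582377x^4 - 5959749341609879x^3 + 3269911760551427x^2 - 1113936554991727x + 178725601175511 ∈ ℚ[x]. The Galois group of R over ℚ (i.e., the Galois group of its splitting field over ℚ) is isomorphic to PGL₂(F₃₁). -/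

import Mathlib

open Polynomial Matrix

noncomputable def R : Polynomial ℚ :=
  X^32 - 4*X^31 - 62*X^30 + 558*X^29 - 248*X^28 - 23560*X^27 + 143499*X^26 + 59489*X^25 - 4280108*X^24 + 17190864*X^23 + 12517459*X^22 - 344750256*X^21 + 1225662500*X^20 - 278789479*X^19 - 14790203106*X^18 + 64357190741*X^17 - 83774789980*X^16 - 406418167694*X^15 + 2480836111912*X^14 - 5273524311353*X^13 - 3257558862543*X^12 + 54285321863574*X^11 - 162450534558477*X^10 + 197719989210108*X^9 + 250865100757790*X^8 - 1714511602191278*X^7 + 4206562171750919*X^6 - 6661579151098950*X^5 + 7460752526582377*X^4 - 5959749341609879*X^3 + 3269911760551427*X^2 - 1113936554991727*X + 178725601175511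

/-!
The Galois group acts faithfully on the 32 roots of `R`. Label the roots by the points of the
projective line over `𝔽₃₁`, and let `χ(a, b, c) ∈ {0, ±1}` be the quadratic character of the product
of the three determinants formed by pairs of points of a triple. A bijection that preserves `χ` up
to sign is a fractional linear transformation: after fixing `∞`, `0` and `1` it preserves quadratic
residues of differences, and power sums then show that it is a polynomial map of degree one.

To see that the Galois group preserves `χ` up to sign, compute its moments, twisted by `√-31`, at
roots modulo `p ^ N` for a prime `p` that splits completely. They are congruent to small integers,
and by Lagrange interpolation these define a trilinear expression `F(a, b, c)` in coefficients of
cofactors of `R` that is congruent to `χ(a, b, c) √-31 D(a, b, c)`, where `D` is a product of three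
values of the derivative of `R`. So `F ^ 2 + 31 χ ^ 2 D ^ 2` and its conjugates are divisible by
the `N`-th power of a prime above `p`. Since they are smaller than `p ^ N` in absolute value, the
norm shows that they vanish. Hence `χ √-31 = F / D` is a rational expression in the roots, and an
automorphism changes `χ` by its sign on `√-31`.

The resulting subgroup of `PGL₂(𝔽₃₁)` is everything: it moves every point, contains an element of
nonsquare determinant because `-31` is not a square, and contains an element with exactly one fixed
point, the Frobenius at a prime above `71`, modulo which `R` has a single, simple root.
-/

theorem sum_pow_eq_ite_of_pos {K : Type*} [Field K] [Fintype K] {i : ℕ} (hi : 0 < i) :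
    ∑ x : K, x ^ i = if Fintype.card K - 1 ∣ i then -1 else 0 := by
  classical
  rw [← FiniteField.sum_pow_units K i, Fintype.sum_eq_add_sum_subtype_ne _ (0 : K),
    zero_pow hi.ne', zero_add]
  exact (Fintype.sum_equiv unitsEquivNeZero _ _ fun _ => rfl).symm

section Rigidity

variable {p : ℕ} [Fact p.Prime]

theorem sum_pow_mul_sub_pow_half (hp : p ≠ 2) {k : ℕ} (hk : k ≤ p / 2) (y : ZMod p) :
    ∑ c : ZMod p, c ^ (p / 2 + k) * (c - y) ^ (p / 2) = -((-y) ^ k * (p / 2).choose k) := by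
  have hodd : p / 2 + p / 2 + 1 = p := by
    have := (Fact.out : p.Prime).eq_two_or_odd; omega
  have hhalf : 0 < p / 2 := by have := (Fact.out : p.Prime).two_le; omega
  have power_sum (j : ℕ) (hj : j ≤ p / 2) :
      ∑ c : ZMod p, c ^ (p / 2 + k + (p / 2 - j)) = if j = k then -1 else 0 := by
    rw [sum_pow_eq_ite_of_pos (by omega), ZMod.card]
    refine if_congr ⟨?_, ?_⟩ rfl rfl
    · rintro ⟨r, hr⟩
      obtain rfl : r = 1 := by
        have : r < 2 := by
          by_contra! h
          have := Nat.mul_le_mul_left (p - 1) h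
          omega
        have : r ≠ 0 := by rintro rfl; omega
        omega
      omega
    · rintro rfl; exact ⟨1, by omega⟩
  calc ∑ c : ZMod p, c ^ (p / 2 + k) * (c - y) ^ (p / 2)
      = ∑ j ∈ Finset.range (p / 2 + 1), (-y) ^ j * (p / 2).choose j *
          ∑ c : ZMod p, c ^ (p / 2 + k + (p / 2 - j)) := by
        simp_rw [sub_eq_neg_add, add_pow, Finset.mul_sum, pow_add]
        rw [Finset.sum_comm]
        exact Finset.sum_congr rfl fun j _ => Finset.sum_congr rfl fun c _ => by ring
    _ = ∑ j ∈ Finset.range (p / 2 + 1), if j = k then -((-y) ^ k * (p / 2).choose k) else 0 := by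
        refine Finset.sum_congr rfl fun j hj => ?_
        rw [power_sum j (Finset.mem_range_succ_iff.mp hj)]
        split_ifs with h <;> simp [h]
    _ = _ := by rw [Finset.sum_ite_eq' _ _ _, if_pos (Finset.mem_range_succ_iff.mpr hk)]

theorem exists_natDegree_le_half_eval_eq_pow (hp : p ≠ 2) {f : ZMod p → ZMod p}
    (hf : ∀ x y, quadraticChar (ZMod p) (f x - f y) = quadraticChar (ZMod p) (x - y))
    {k : ℕ} (hk : k ≤ p / 2) :
    ∃ P : (ZMod p)[X], P.natDegree ≤ p / 2 ∧ ∀ y, P.eval y = f y ^ k := by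
  have hinj : Function.Injective f := fun x y h => by
    have := hf x y
    rwa [h, sub_self, MulChar.map_zero, eq_comm, quadraticChar_eq_zero_iff, sub_eq_zero] at this
  have hchar : ringChar (ZMod p) ≠ 2 := by rwa [ZMod.ringChar_zmod_n]
  have hpow (x y : ZMod p) : (f x - f y) ^ (p / 2) = (x - y) ^ (p / 2) := by
    have := quadraticChar_eq_pow_of_char_ne_two' hchar (f x - f y)
    rw [hf, quadraticChar_eq_pow_of_char_ne_two' hchar, ZMod.card] at this
    exact this.symm
  have hchoose : ((p / 2).choose k : ZMod p) ≠ 0 := by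
    rw [Ne, ZMod.natCast_eq_zero_iff]
    intro hdvd
    have := (Nat.Prime.dvd_factorial Fact.out).mp <| hdvd.trans <| Dvd.intro _ <|
      (mul_assoc _ _ _).symm.trans (Nat.choose_mul_factorial_mul_factorial hk)
    have := (Fact.out : p.Prime).two_le
    omega
  set a : ZMod p := (-1) ^ k * (p / 2).choose k
  have ha : a ≠ 0 := mul_ne_zero (pow_ne_zero _ (by simp)) hchoose
  refine ⟨C (-a⁻¹) * ∑ c, C (f c ^ (p / 2 + k)) * (C c - X) ^ (p / 2), ?_, fun y => ?_⟩
  · refine (natDegree_C_mul_le _ _).trans <| natDegree_sum_le_of_forall_le _ _ fun c _ => ?_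
    compute_degree
  · have hsum := sum_pow_mul_sub_pow_half hp hk (f y)
    rw [← (Finite.injective_iff_bijective.mp hinj).sum_comp
      (fun c => c ^ (p / 2 + k) * (c - f y) ^ (p / 2))] at hsum
    simp_rw [hpow] at hsum
    simp only [eval_mul, eval_C, eval_finsetSum, eval_pow, eval_sub, eval_X, hsum]
    rw [neg_pow]
    field_simp
    simp only [a]; ring

theorem eq_id_of_quadraticChar_sub (hp : p ≠ 2) {f : ZMod p → ZMod p}
    (hf : ∀ x y, quadraticChar (ZMod p) (f x - f y) = quadraticChar (ZMod p) (x - y))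
    (h0 : f 0 = 0) (h1 : f 1 = 1) : f = id := by
  have hp2 := (Fact.out : p.Prime).two_le
  have hodd := (Fact.out : p.Prime).eq_two_or_odd
  obtain ⟨P, hP, hPf⟩ := exists_natDegree_le_half_eval_eq_pow hp hf (k := 1) (by omega)
  simp only [pow_one] at hPf
  have hdeg : P.natDegree ≤ 1 := by
    by_contra! hd
    -- the least `k` with `k * natDegree P > (p - 1) / 2`
    set k := p / 2 / P.natDegree + 1
    have hk_gt : p / 2 < k * P.natDegree := mul_comm k _ ▸ Nat.lt_mul_div_succ _ (by omega)
    have hk_le : k * P.natDegree ≤ p - 1 := by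
      have := Nat.div_mul_le_self (p / 2) P.natDegree
      rw [add_mul]; omega
    obtain ⟨Q, hQ, hQf⟩ := exists_natDegree_le_half_eval_eq_pow hp hf (k := k) (by
      have : p / 2 / P.natDegree ≤ p / 2 / 2 := Nat.div_le_div_left hd two_pos
      omega)
    have hQP : P ^ k = Q := eq_of_natDegree_lt_card_of_eval_eq _ _ Function.injective_id
      (fun y => by simp [hPf, hQf]) (by rw [natDegree_pow, ZMod.card]; omega)
    rw [← hQP, natDegree_pow] at hQ
    omega
  rw [eq_X_add_C_of_natDegree_le_one hdeg] at hPf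
  simp only [eval_add, eval_mul, eval_C, eval_X] at hPf
  have hconst : P.coeff 0 = 0 := by simpa [h0] using hPf 0
  have hslope : P.coeff 1 = 1 := by simpa [h1, hconst] using hPf 1
  exact funext fun y => by simp [← hPf y, hconst, hslope]

end Rigidity

section ProjectiveLine

open OnePoint

variable {K : Type*} [Field K]

/-- The representative `(x, 1)` of `x : K`, respectively `(1, 0)` of `∞`, in homogeneous
coordinates on the projective line. -/
def homCoord : OnePoint K → Fin 2 → K
  | ∞ => ![1, 0]
  | (x : K) => ![x, 1]

/-- The determinant of the representatives `homCoord` of two points of the projective line. -/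
def bracket (x y : OnePoint K) : K :=
  homCoord x 0 * homCoord y 1 - homCoord y 0 * homCoord x 1

@[simp] lemma homCoord_infty : homCoord (∞ : OnePoint K) = ![1, 0] := rfl

@[simp] lemma homCoord_coe (x : K) : homCoord (x : OnePoint K) = ![x, 1] := rfl

lemma bracket_eq_zero_iff {x y : OnePoint K} : bracket x y = 0 ↔ x = y := by
  induction x using OnePoint.rec <;> induction y using OnePoint.rec <;>
    simp [bracket, sub_eq_zero]

variable [DecidableEq K]

lemma exists_mulVec_homCoord (g : GL (Fin 2) K) (x : OnePoint K) :
    ∃ c : K, c ≠ 0 ∧ g.val *ᵥ homCoord x = c • homCoord (g • x) := by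
  have hdet := g.det_ne_zero
  rw [det_fin_two] at hdet
  induction x using OnePoint.rec with
  | infty =>
    rw [smul_infty_eq_ite]
    split_ifs with h
    · exact ⟨g 0 0, by aesop, by simp [h]⟩
    · exact ⟨g 1 0, h, by simp [mul_div_cancel₀ _ h]⟩
  | coe x =>
    rw [smul_some_eq_ite]
    split_ifs with h
    · refine ⟨g 0 0 * x + g 0 1, fun h' => hdet ?_, by simp [h]⟩
      linear_combination g 0 0 * h - g 1 0 * h'
    · exact ⟨g 1 0 * x + g 1 1, h, by simp [mul_div_cancel₀ _ h]⟩

lemma smul_eq_of_mulVec_homCoord {g : GL (Fin 2) K} {x y : OnePoint K} {c : K}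
    (h : g.val *ᵥ homCoord x = c • homCoord y) : g • x = y := by
  obtain ⟨d, hd, hgx⟩ := exists_mulVec_homCoord g x
  have heq := hgx.symm.trans h
  have h0 : d * homCoord (g • x) 0 = c * homCoord y 0 := by simpa using congrFun heq 0
  have h1 : d * homCoord (g • x) 1 = c * homCoord y 1 := by simpa using congrFun heq 1
  refine bracket_eq_zero_iff.mp ((mul_eq_zero_iff_left hd).mp ?_)
  rw [bracket]
  linear_combination homCoord y 1 * h0 - homCoord y 0 * h1

lemma exists_smul_eq_of_ne {u v w : OnePoint K} (huv : u ≠ v) (huw : u ≠ w) (hwv : w ≠ v) :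
    ∃ g : GL (Fin 2) K, g • ∞ = u ∧ g • ((0 : K) : OnePoint K) = v ∧
      g • ((1 : K) : OnePoint K) = w := by
  rw [Ne, ← bracket_eq_zero_iff] at huv huw hwv
  let α := bracket w v / bracket u v
  let β := bracket u w / bracket u v
  have hsum (i : Fin 2) : α * homCoord u i + β * homCoord v i = homCoord w i := by
    simp only [α, β]
    field_simp
    fin_cases i <;> simp [bracket] <;> ring
  have hdet : det !![α * homCoord u 0, β * homCoord v 0; α * homCoord u 1, β * homCoord v 1] =
      α * β * bracket u v := by
    rw [det_fin_two_of, bracket]; ring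
  refine ⟨GeneralLinearGroup.mkOfDetNeZero _ (hdet ▸ mul_ne_zero (mul_ne_zero
    (div_ne_zero hwv huv) (div_ne_zero huw huv)) huv), ?_, ?_, ?_⟩
  · exact smul_eq_of_mulVec_homCoord (c := α) <| by
      ext i; fin_cases i <;> simp [GeneralLinearGroup.mkOfDetNeZero]
  · exact smul_eq_of_mulVec_homCoord (c := β) <| by
      ext i; fin_cases i <;> simp [GeneralLinearGroup.mkOfDetNeZero]
  · exact smul_eq_of_mulVec_homCoord (c := 1) <| by
      ext i; fin_cases i <;> simp [GeneralLinearGroup.mkOfDetNeZero, hsum]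

lemma toPermHom_ker_eq_center :
    (MulAction.toPermHom (GL (Fin 2) K) (OnePoint K)).ker = Subgroup.center (GL (Fin 2) K) := by
  ext g
  rw [MonoidHom.mem_ker, GeneralLinearGroup.mem_center_iff_val_mem_range_scalar]
  refine ⟨fun h => ?_, ?_⟩
  · have hfix (x : OnePoint K) : g • x = x := congrFun (congrArg DFunLike.coe h) x
    have h10 : g 1 0 = 0 := smul_infty_eq_self_iff.mp (hfix ∞)
    have hdet := g.det_ne_zero
    rw [det_fin_two, h10, mul_zero, sub_zero] at hdet
    have h11 : g 1 1 ≠ 0 := right_ne_zero_of_mul hdet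
    have hlin (k : K) : g 0 0 * k + g 0 1 = k * g 1 1 := by
      have := hfix k
      rw [smul_some_eq_ite, h10, zero_mul, zero_add, if_neg h11] at this
      exact (div_eq_iff h11).mp (OnePoint.coe_injective this)
    have h01 : g 0 1 = 0 := by simpa using hlin 0
    have h00 : g 0 0 = g 1 1 := by simpa [h01] using hlin 1
    exact ⟨g 0 0, by ext i j; fin_cases i <;> fin_cases j <;> simp [h01, h10, h00]⟩
  · rintro ⟨a, ha⟩
    exact Equiv.ext fun x => smul_eq_of_mulVec_homCoord (c := a) (by simp [← ha])

lemma mul_bracket_smul {g : GL (Fin 2) K} {x y : OnePoint K} {a b : K}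
    (hx : g.val *ᵥ homCoord x = a • homCoord (g • x))
    (hy : g.val *ᵥ homCoord y = b • homCoord (g • y)) :
    a * b * bracket (g • x) (g • y) = g.val.det * bracket x y := by
  have hdet : (g.val *ᵥ homCoord x) 0 * (g.val *ᵥ homCoord y) 1 -
      (g.val *ᵥ homCoord y) 0 * (g.val *ᵥ homCoord x) 1 = g.val.det * bracket x y := by
    simp only [mulVec_fin_two, cons_val_zero, cons_val_one, cons_val_fin_one, det_fin_two, bracket]
    ring
  rw [← hdet, hx, hy, bracket]
  simp only [Pi.smul_apply, smul_eq_mul]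
  ring

variable [Fintype K]

/-- The product of the quadratic characters of the three brackets of a triple of points; up to the
square class of the determinant it is the invariant of triples under `GL₂`. -/
def tripleChar (x y z : OnePoint K) : ℤ :=
  quadraticChar K (bracket x y) * quadraticChar K (bracket y z) * quadraticChar K (bracket z x)

lemma tripleChar_eq_quadraticChar (x y z : OnePoint K) :
    tripleChar x y z = quadraticChar K (bracket x y * bracket y z * bracket z x) := by
  rw [tripleChar, map_mul, map_mul]

lemma tripleChar_smul (g : GL (Fin 2) K) (x y z : OnePoint K) :
    tripleChar (g • x) (g • y) (g • z) = quadraticChar K g.val.det * tripleChar x y z := by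
  obtain ⟨a, ha, hx⟩ := exists_mulVec_homCoord g x
  obtain ⟨b, hb, hy⟩ := exists_mulVec_homCoord g y
  obtain ⟨c, hc, hz⟩ := exists_mulVec_homCoord g z
  have hbrackets : (a * b * c) ^ 2 * (bracket (g • x) (g • y) * bracket (g • y) (g • z) *
      bracket (g • z) (g • x)) =
      g.val.det ^ 2 * (g.val.det * (bracket x y * bracket y z * bracket z x)) := by
    linear_combination (b * c * bracket (g • y) (g • z)) * (c * a * bracket (g • z) (g • x)) *
      mul_bracket_smul hx hy + g.val.det * bracket x y * (c * a * bracket (g • z) (g • x)) *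
      mul_bracket_smul hy hz + g.val.det ^ 2 * bracket x y * bracket y z * mul_bracket_smul hz hx
  have := congrArg (quadraticChar K) hbrackets
  rwa [map_mul, quadraticChar_sq_one' (mul_ne_zero (mul_ne_zero ha hb) hc), one_mul,
    map_mul _ (_ ^ 2), quadraticChar_sq_one' g.det_ne_zero, one_mul, map_mul _ g.val.det,
    ← tripleChar_eq_quadraticChar, ← tripleChar_eq_quadraticChar] at this

lemma tripleChar_infty_coe_coe (x y : K) :
    tripleChar ∞ (x : OnePoint K) y = quadraticChar K (y - x) := by
  simp [tripleChar_eq_quadraticChar, bracket]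

lemma tripleChar_infty_zero_one : tripleChar ∞ ((0 : K) : OnePoint K) (1 : K) = 1 := by
  rw [tripleChar_infty_coe_coe, sub_zero, map_one]

lemma tripleChar_eq_zero_or (x y z : OnePoint K) :
    tripleChar x y z = 0 ∨ tripleChar x y z = 1 ∨ tripleChar x y z = -1 := by
  rw [tripleChar_eq_quadraticChar]
  exact quadraticChar_isQuadratic K _

lemma tripleChar_eq_zero_iff {x y z : OnePoint K} :
    tripleChar x y z = 0 ↔ x = y ∨ y = z ∨ z = x := by
  rw [tripleChar_eq_quadraticChar, quadraticChar_eq_zero_iff, mul_eq_zero, mul_eq_zero, or_assoc]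
  simp only [bracket_eq_zero_iff]

lemma tripleChar_apply_sq {π : OnePoint K → OnePoint K} (hπ : Function.Injective π)
    (x y z : OnePoint K) : tripleChar (π x) (π y) (π z) ^ 2 = tripleChar x y z ^ 2 := by
  have hzero : tripleChar (π x) (π y) (π z) = 0 ↔ tripleChar x y z = 0 := by
    simp only [tripleChar_eq_zero_iff, hπ.eq_iff]
  rcases tripleChar_eq_zero_or x y z with h | h | h <;>
    rcases tripleChar_eq_zero_or (π x) (π y) (π z) with h' | h' | h' <;>
    simp_all

end ProjectiveLine

open OnePoint in
theorem exists_smul_eq_of_tripleChar {p : ℕ} [Fact p.Prime] (hp : p ≠ 2)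
    {π : OnePoint (ZMod p) → OnePoint (ZMod p)} (hπ : Function.Injective π) {ε : ℤ}
    (h : ∀ x y z, tripleChar (π x) (π y) (π z) = ε * tripleChar x y z) :
    ∃ g : GL (Fin 2) (ZMod p), ∀ x, π x = g • x := by
  obtain ⟨g, hinf, hzero, hone⟩ := exists_smul_eq_of_ne
    (hπ.ne (infty_ne_coe (0 : ZMod p))) (hπ.ne (infty_ne_coe (1 : ZMod p)))
    (hπ.ne (OnePoint.coe_injective.ne one_ne_zero))
  set ρ : OnePoint (ZMod p) → OnePoint (ZMod p) := fun x => g⁻¹ • π x with hρ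
  have hρ_infty : ρ ∞ = ∞ := by rw [hρ]; exact inv_smul_eq_iff.mpr hinf.symm
  have hρ_zero : ρ (0 : ZMod p) = (0 : ZMod p) := inv_smul_eq_iff.mpr hzero.symm
  have hρ_one : ρ (1 : ZMod p) = (1 : ZMod p) := inv_smul_eq_iff.mpr hone.symm
  have hρ_ne (x : ZMod p) : ρ x ≠ ∞ := fun hx =>
    coe_ne_infty x (hπ (MulAction.injective g⁻¹ (hx.trans hρ_infty.symm)))
  choose f hf using fun x => ne_infty_iff_exists.mp (hρ_ne x)
  have hρ_char (x y z) : tripleChar (ρ x) (ρ y) (ρ z) =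
      quadraticChar (ZMod p) g⁻¹.val.det * ε * tripleChar x y z := by
    rw [hρ, tripleChar_smul, h, mul_assoc]
  have hscale : quadraticChar (ZMod p) g⁻¹.val.det * ε = 1 := by
    have := hρ_char ∞ (0 : ZMod p) (1 : ZMod p)
    rw [hρ_infty, hρ_zero, hρ_one, tripleChar_infty_coe_coe, sub_zero, map_one, mul_one] at this
    exact this.symm
  have hf_id : f = id := by
    refine eq_id_of_quadraticChar_sub hp (fun x y => ?_) ?_ ?_
    · have := hρ_char ∞ y x
      rwa [hρ_infty, ← hf, ← hf, hscale, one_mul, tripleChar_infty_coe_coe,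
        tripleChar_infty_coe_coe] at this
    · exact OnePoint.coe_injective ((hf 0).trans hρ_zero)
    · exact OnePoint.coe_injective ((hf 1).trans hρ_one)
  refine ⟨g, fun x => inv_smul_eq_iff.mp ?_⟩
  induction x using OnePoint.rec with
  | infty => exact hρ_infty
  | coe x => exact (hf x).symm.trans (congrArg _ (congrFun hf_id x))

section Generation

open GeneralLinearGroup OnePoint

variable {K : Type*} [Field K]

/-- The lower unipotent matrix `[1, 0; x, 1]`, the transpose of `upperRightHom x`. -/
def lowerLeft (x : K) : GL (Fin 2) K :=
  mkOfDetNeZero !![1, 0; x, 1] (by simp)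

@[simp] lemma lowerLeft_val (x : K) : (lowerLeft x).val = !![1, 0; x, 1] := rfl

lemma upperRightHom_val (x : K) : (upperRightHom x).val = !![1, x; 0, 1] := rfl

lemma scalar_mem_center (a : Kˣ) :
    GeneralLinearGroup.scalar (Fin 2) a ∈ Subgroup.center (GL (Fin 2) K) :=
  center_eq_range_scalar (n := Fin 2) (R := K) ▸ ⟨a, rfl⟩

variable {H : Subgroup (GL (Fin 2) K)}

lemma mem_of_det_eq_one (hupper : ∀ x, upperRightHom x ∈ H) (hlower : ∀ x, lowerLeft x ∈ H)
    {g : GL (Fin 2) K} (hg : g.val.det = 1) : g ∈ H := by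
  have mem_of_ne_zero {g : GL (Fin 2) K} (hg : g.val.det = 1) (hc : g 1 0 ≠ 0) : g ∈ H := by
    have : g = upperRightHom ((g 0 0 - 1) / g 1 0) * lowerLeft (g 1 0) *
        upperRightHom ((g 1 1 - 1) / g 1 0) := by
      rw [det_fin_two] at hg
      ext i j
      simp only [Units.val_mul, upperRightHom_val, lowerLeft_val, mul_fin_two]
      fin_cases i <;> fin_cases j <;> simp <;> field_simp
      · ring
      · linear_combination -hg
      · ring
    rw [this]
    exact H.mul_mem (H.mul_mem (hupper _) (hlower _)) (hupper _)
  by_cases hc : g 1 0 = 0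
  · refine (H.mul_mem_cancel_left (hlower 1)).mp (mem_of_ne_zero ?_ ?_)
    · rw [Units.val_mul, det_mul, hg, lowerLeft_val]; simp
    · rw [det_fin_two, hc] at hg
      suffices g 0 0 ≠ 0 by simpa [mul_apply, hc]
      rintro h
      simp [h] at hg
  · exact mem_of_ne_zero hg hc

lemma mem_of_isSquare_det (hcenter : Subgroup.center (GL (Fin 2) K) ≤ H)
    (hupper : ∀ x, upperRightHom x ∈ H) (hlower : ∀ x, lowerLeft x ∈ H)
    {g : GL (Fin 2) K} (hg : IsSquare g.val.det) : g ∈ H := by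
  obtain ⟨s, hs⟩ := hg
  have hs0 : s ≠ 0 := by rintro rfl; exact g.det_ne_zero (by simpa using hs)
  let z : GL (Fin 2) K := GeneralLinearGroup.scalar (Fin 2) (Units.mk0 s hs0)
  have hz : z ∈ H := hcenter (scalar_mem_center _)
  refine (H.mul_mem_cancel_left (H.inv_mem hz)).mp (mem_of_det_eq_one hupper hlower ?_)
  have hdet : z.val.det = s * s := by simp [z, sq]
  rw [Units.val_mul, det_mul, hs, ← hdet, ← det_mul, ← Units.val_mul, inv_mul_cancel, Units.val_one,
    det_one]

theorem eq_top_of_unipotent_mem [Finite K] (hcenter : Subgroup.center (GL (Fin 2) K) ≤ H)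
    (hupper : ∀ x, upperRightHom x ∈ H) (hlower : ∀ x, lowerLeft x ∈ H)
    (hdet : ∃ g ∈ H, ¬IsSquare g.val.det) : H = ⊤ := by
  classical
  have := Fintype.ofFinite K
  obtain ⟨d, hdH, hd⟩ := hdet
  refine (Subgroup.eq_top_iff' H).mpr fun g => ?_
  by_cases hg : IsSquare g.val.det
  · exact mem_of_isSquare_det hcenter hupper hlower hg
  · refine (H.mul_mem_cancel_left hdH).mp (mem_of_isSquare_det hcenter hupper hlower ?_)
    rw [← quadraticChar_one_iff_isSquare (d * g).det_ne_zero, Units.val_mul, det_mul, map_mul,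
      quadraticChar_neg_one_iff_not_isSquare.mpr hd, quadraticChar_neg_one_iff_not_isSquare.mpr hg]
    rfl

variable [DecidableEq K]

lemma exists_mul_upperRightHom_of_fixes_infty {g : GL (Fin 2) K} (hinf : g • (∞ : OnePoint K) = ∞)
    (h01 : g • ((0 : K) : OnePoint K) = (1 : K)) (hfix : ∀ x : K, g • (x : OnePoint K) ≠ x) :
    ∃ a : Kˣ, g = GeneralLinearGroup.scalar (Fin 2) a * upperRightHom 1 := by
  have h10 : g 1 0 = 0 := smul_infty_eq_self_iff.mp hinf
  have hdet := g.det_ne_zero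
  rw [det_fin_two, h10, mul_zero, sub_zero] at hdet
  have h00 : g 0 0 ≠ 0 := left_ne_zero_of_mul hdet
  have h11 : g 1 1 ≠ 0 := right_ne_zero_of_mul hdet
  have hsmul (x : K) : g • (x : OnePoint K) = ((g 0 0 * x + g 0 1) / g 1 1 : K) := by
    rw [smul_some_eq_ite, h10, zero_mul, zero_add, if_neg h11]
  have h0111 : g 0 1 = g 1 1 := by
    simpa [div_eq_one_iff_eq h11, OnePoint.coe_eq_coe] using (hsmul 0).symm.trans h01
  have h0011 : g 0 0 = g 1 1 := by
    by_contra hne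
    have hne' : g 1 1 - g 0 0 ≠ 0 := sub_ne_zero.mpr (Ne.symm hne)
    refine hfix (g 0 1 / (g 1 1 - g 0 0)) ((hsmul _).trans (congrArg _ ?_))
    field_simp
    ring
  refine ⟨Units.mk0 _ h00, ?_⟩
  ext i j
  rw [Units.val_mul, upperRightHom_val]
  fin_cases i <;> fin_cases j <;> simp [h10, h0011, h0111]

lemma exists_mul_upperRightHom_eq_lowerLeft_mul {k : GL (Fin 2) K}
    (hk : k • (∞ : OnePoint K) = (0 : K)) (x : K) :
    ∃ y, k * upperRightHom y = lowerLeft x * k := by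
  have h10 : k 1 0 ≠ 0 := by
    rw [Ne, ← smul_infty_eq_self_iff, hk]
    exact coe_ne_infty 0
  have h00 : k 0 0 = 0 := by
    rw [smul_infty_eq_ite, if_neg h10, OnePoint.coe_eq_coe, div_eq_zero_iff] at hk
    exact hk.resolve_right h10
  refine ⟨x * k 0 1 / k 1 0, ?_⟩
  ext i j
  rw [Units.val_mul, Units.val_mul, upperRightHom_val, lowerLeft_val, eta_fin_two k.val]
  fin_cases i <;> fin_cases j <;> simp [h00]; field_simp

variable {p : ℕ} [Fact p.Prime] {H : Subgroup (GL (Fin 2) (ZMod p))}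

theorem eq_top_of_fixes_infty (hcenter : Subgroup.center (GL (Fin 2) (ZMod p)) ≤ H)
    (hdet : ∃ g ∈ H, ¬IsSquare g.val.det)
    {g : GL (Fin 2) (ZMod p)} (hgH : g ∈ H) (hinf : g • (∞ : OnePoint (ZMod p)) = ∞)
    (h01 : g • ((0 : ZMod p) : OnePoint (ZMod p)) = (1 : ZMod p))
    (hfix : ∀ x : ZMod p, g • (x : OnePoint (ZMod p)) ≠ x)
    {k : GL (Fin 2) (ZMod p)} (hkH : k ∈ H) (hk : k • (∞ : OnePoint (ZMod p)) = (0 : ZMod p)) :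
    H = ⊤ := by
  obtain ⟨a, rfl⟩ := exists_mul_upperRightHom_of_fixes_infty hinf h01 hfix
  have hone : upperRightHom 1 ∈ H :=
    (H.mul_mem_cancel_left (hcenter (scalar_mem_center a))).mp hgH
  have hupper (x : ZMod p) : upperRightHom x ∈ H := by
    rw [← ZMod.natCast_zmod_val x, ← nsmul_one, AddChar.map_nsmul_eq_pow]
    exact H.pow_mem hone _
  refine eq_top_of_unipotent_mem hcenter hupper (fun x => ?_) hdet
  obtain ⟨y, hy⟩ := exists_mul_upperRightHom_eq_lowerLeft_mul hk x
  exact (H.mul_mem_cancel_right hkH).mp (hy ▸ H.mul_mem hkH (hupper y))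

theorem eq_top_of_smul_eq_self_iff (hcenter : Subgroup.center (GL (Fin 2) (ZMod p)) ≤ H)
    (hdet : ∃ g ∈ H, ¬IsSquare g.val.det)
    (hmove : ∀ x : OnePoint (ZMod p), ∃ k ∈ H, k • x ≠ x)
    (hunique : ∃ g ∈ H, ∃ x : OnePoint (ZMod p), ∀ y, g • y = y ↔ y = x) : H = ⊤ := by
  obtain ⟨g, hgH, x, hg⟩ := hunique
  obtain ⟨k, hkH, hkx⟩ := hmove x
  have hgx : g • x = x := (hg x).mpr rfl
  obtain ⟨h, hinf, hzero, hone⟩ := exists_smul_eq_of_ne (u := x) (v := k • x) (w := g • k • x)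
    (Ne.symm hkx) (fun he => hkx (MulAction.injective g (he.symm.trans hgx.symm)))
    (fun he => hkx ((hg _).mp he))
  -- conjugate `x`, `k • x` and `g • k • x` to `∞`, `0` and `1`
  let c := (MulAut.conj h).toMonoidHom
  have smul_conj (l : GL (Fin 2) (ZMod p)) (y z : OnePoint (ZMod p)) :
      (h⁻¹ * l * h) • y = z ↔ l • h • y = h • z := by
    rw [mul_smul, mul_smul, inv_smul_eq_iff]
  have mem_conj {l : GL (Fin 2) (ZMod p)} : h⁻¹ * l * h ∈ H.comap c ↔ l ∈ H := by
    simp [c, mul_assoc]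
  suffices H.comap c = ⊤ from
    top_le_iff.mp fun l _ => mem_conj.mp (this ▸ Subgroup.mem_top _)
  refine eq_top_of_fixes_infty ?_ ?_ (mem_conj.mpr hgH) ?_ ?_ ?_ (mem_conj.mpr hkH) ?_
  · intro z hz
    have hcz : c z = z := mul_inv_eq_of_eq_mul (Subgroup.mem_center_iff.mp hz h)
    exact Subgroup.mem_comap.mpr (hcz.symm ▸ hcenter hz)
  · obtain ⟨d, hdH, hd⟩ := hdet
    refine ⟨h⁻¹ * d * h, mem_conj.mpr hdH, ?_⟩
    rwa [Units.val_mul, Units.val_mul, det_mul_right_comm, ← Units.val_mul, inv_mul_cancel,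
      Units.val_one, one_mul]
  · rw [smul_conj, hinf, hgx]
  · rw [smul_conj, hzero, hone]
  · intro y hy
    rw [smul_conj, hg, ← hinf] at hy
    exact coe_ne_infty y (MulAction.injective h hy)
  · rw [smul_conj, hinf, hzero]

end Generation

section ActionOnProjectiveLine

open OnePoint MatrixGroups

theorem nonempty_mulEquiv_PGL {p : ℕ} [Fact p.Prime] (hp : p ≠ 2) {G : Type*}
    [Group G] {ψ : G →* Equiv.Perm (OnePoint (ZMod p))} (hψ : Function.Injective ψ)
    (hchar : ∀ g, ∃ ε : ℤ, ∀ x y z,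
      tripleChar (ψ g x) (ψ g y) (ψ g z) = ε * tripleChar x y z)
    (hnonsq : ∃ g x y z, tripleChar (ψ g x) (ψ g y) (ψ g z) ≠ tripleChar x y z)
    (hmove : ∀ x, ∃ g, ψ g x ≠ x) (hunique : ∃ g x, ∀ y, ψ g y = y ↔ y = x) :
    Nonempty (G ≃* PGL(2, ZMod p)) := by
  let Φ := MulAction.toPermHom (GL (Fin 2) (ZMod p)) (OnePoint (ZMod p))
  have hlift (g : G) : ∃ k, Φ k = ψ g := by
    obtain ⟨ε, hε⟩ := hchar g
    obtain ⟨k, hk⟩ := exists_smul_eq_of_tripleChar hp (ψ g).injective hε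
    exact ⟨k, Equiv.ext fun x => (hk x).symm⟩
  have hmem {g : G} {k : GL (Fin 2) (ZMod p)} (hk : Φ k = ψ g) : k ∈ ψ.range.comap Φ :=
    ⟨g, hk.symm⟩
  have htop : ψ.range.comap Φ = ⊤ := by
    refine eq_top_of_smul_eq_self_iff ?_ ?_ (fun x => ?_) ?_
    · exact toPermHom_ker_eq_center.symm.le.trans (Subgroup.ker_le_comap Φ ψ.range)
    · obtain ⟨g, x, y, z, hne⟩ := hnonsq
      obtain ⟨k, hk⟩ := hlift g
      refine ⟨k, hmem hk, fun hsq => hne ?_⟩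
      rw [← hk]
      refine (tripleChar_smul k x y z).trans ?_
      rw [(quadraticChar_one_iff_isSquare k.det_ne_zero).mpr hsq, one_mul]
    · obtain ⟨g, hg⟩ := hmove x
      obtain ⟨k, hk⟩ := hlift g
      exact ⟨k, hmem hk, by rwa [← hk] at hg⟩
    · obtain ⟨g, x, hg⟩ := hunique
      obtain ⟨k, hk⟩ := hlift g
      exact ⟨k, hmem hk, x, by rwa [← hk] at hg⟩
  have hrange : ψ.range = Φ.range := by
    refine le_antisymm ?_ ?_
    · rintro _ ⟨g, rfl⟩
      exact hlift g
    · rw [MonoidHom.range_eq_map, Subgroup.map_le_iff_le_comap, htop]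
  exact ⟨(MonoidHom.ofInjective hψ).trans <| (MulEquiv.subgroupCongr hrange).trans <|
    (QuotientGroup.quotientKerEquivRange Φ).symm.trans <|
    QuotientGroup.quotientMulEquivOfEq toPermHom_ker_eq_center⟩

end ActionOnProjectiveLine

section DedekindDomain

variable {A : Type*} [CommRing A] [IsDedekindDomain A] {P : Ideal A} [P.IsPrime]

theorem exists_isRoot_sub_mem_pow {f : A[X]} (hf : f.Splits) (hmonic : f.Monic) {r : A} {n : ℕ}
    (hn : n ≠ 0) (hr : f.eval r ∈ P ^ n) (hder : f.derivative.eval r ∉ P) :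
    ∃ x, f.IsRoot x ∧ r - x ∈ P ^ n := by
  have hmem : (f.roots.map (r - ·)).prod ∈ P := by
    rw [← hf.eval_eq_prod_roots_of_monic hmonic]
    exact Ideal.pow_le_self hn hr
  obtain ⟨_, hx, hxP⟩ := (Ideal.IsPrime.multiset_prod_mem_iff_exists_mem ‹_› _).mp hmem
  obtain ⟨x, hroot, rfl⟩ := Multiset.mem_map.mp hx
  have hxf : f.IsRoot x := isRoot_of_mem_roots hroot
  obtain ⟨g, rfl⟩ := dvd_iff_isRoot.mpr hxf
  refine ⟨x, hxf, ?_⟩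
  simp only [eval_mul, eval_sub, eval_X, eval_C, derivative_mul, derivative_sub, derivative_X,
    derivative_C, sub_zero, one_mul, eval_add] at hr hder
  have hg : g.eval r ∉ P := fun hg => hder (P.add_mem hg (P.mul_mem_right _ hxP))
  rw [mul_comm] at hr
  exact (Ideal.IsPrime.mul_mem_pow P hr).resolve_left hg

end DedekindDomain

section NumberField

open NumberField Pointwise

theorem dvd_of_intCast_mem {A : Type*} [CommRing A] {P : Ideal A} (hP : P ≠ ⊤) {p : ℕ}
    (hp : p.Prime) (hpP : (p : A) ∈ P) {n : ℤ} (hn : (n : A) ∈ P) : (p : ℤ) ∣ n := by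
  by_contra hdvd
  obtain ⟨u, v, huv⟩ := (((Nat.prime_iff_prime_int.mp hp).coprime_iff_not_dvd).mpr hdvd).map
    (Int.castRingHom A)
  refine hP (P.eq_top_iff_one.mpr (huv ▸ P.add_mem (P.mul_mem_left u ?_) (P.mul_mem_left v ?_)))
  · simpa using hpP
  · simpa using hn

variable {L : Type*} [Field L] [NumberField L]

theorem natAbs_norm_lt_pow {e : 𝓞 L} (he : e ≠ 0) {B : ℝ} (hbound : ∀ φ : L →+* ℂ, ‖φ e‖ < B) :
    ((Algebra.norm ℤ e).natAbs : ℝ) < B ^ Module.finrank ℚ L := by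
  have hnorm : ((Algebra.norm ℤ e).natAbs : ℝ) = ∏ φ : L →ₐ[ℚ] ℂ, ‖φ e‖ := by
    rw [← norm_prod, ← Algebra.norm_eq_prod_embeddings ℚ ℂ (e : L), ← Algebra.coe_norm_int,
      Nat.cast_natAbs, Int.cast_abs]
    simp
  rw [hnorm, ← AlgHom.card ℚ L ℂ, ← Finset.card_univ, ← Finset.prod_const]
  have : Nonempty (L →ₐ[ℚ] ℂ) := ⟨IsAlgClosed.lift⟩
  exact Finset.prod_lt_prod_of_nonempty (fun φ _ => norm_pos_iff.mpr (by simpa using he))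
    (fun φ _ => hbound φ) Finset.univ_nonempty

variable [IsGalois ℚ L] {P : Ideal (𝓞 L)} [P.IsPrime] {p : ℕ}

theorem pow_finrank_dvd_natAbs_norm (hp : p.Prime) (hpP : (p : 𝓞 L) ∈ P)
    (hstab : ∀ σ : Gal(L/ℚ), σ • P = P → σ = 1) {e : 𝓞 L} {N : ℕ}
    (he : ∀ σ : Gal(L/ℚ), σ • e ∈ P ^ N) :
    (p ^ N) ^ Module.finrank ℚ L ∣ (Algebra.norm ℤ e).natAbs := by
  have natCast_mem (σ : Gal(L/ℚ)) : (p : 𝓞 L) ∈ σ • P := by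
    rw [Ideal.mem_pointwise_smul_iff_inv_smul_mem]
    have hfix : σ⁻¹ • (p : 𝓞 L) = p :=
      map_natCast (MulSemiringAction.toRingHom Gal(L/ℚ) (𝓞 L) σ⁻¹) p
    rwa [hfix]
  have hprime (σ : Gal(L/ℚ)) : Prime (σ • P) := by
    refine Ideal.prime_of_isPrime (fun hbot => hp.ne_zero ?_) inferInstance
    simpa [hbot] using natCast_mem σ
  have hprod : e ∈ ∏ σ : Gal(L/ℚ), (σ • P) ^ N := by
    rw [← IsDedekindDomain.inf_pow_eq_prod_of_prime _ _ _ (fun σ _ => hprime σ)]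
    · refine Submodule.mem_finsetInf.mpr fun σ _ => ?_
      rw [← smul_pow', Ideal.mem_pointwise_smul_iff_inv_smul_mem]
      exact he σ⁻¹
    · intro σ _ τ _ hne heq
      exact hne (inv_mul_eq_one.mp (hstab _ (by rw [mul_smul, heq, inv_smul_smul]))).symm
  calc (p ^ N) ^ Module.finrank ℚ L
      = ∏ _σ : Gal(L/ℚ), p ^ N := by
        rw [Finset.prod_const, Finset.card_univ, ← Nat.card_eq_fintype_card,
          IsGalois.card_aut_eq_finrank]
    _ ∣ ∏ σ : Gal(L/ℚ), Ideal.absNorm (σ • P) ^ N := Finset.prod_dvd_prod_of_dvd _ _ fun σ _ =>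
        pow_dvd_pow_of_dvd
          (Int.natCast_dvd_natCast.mp (dvd_of_intCast_mem Ideal.IsPrime.ne_top' hp (natCast_mem σ)
            (by simpa using Ideal.absNorm_mem (σ • P)))) N
    _ = Ideal.absNorm (∏ σ : Gal(L/ℚ), (σ • P) ^ N) := by simp_rw [map_prod, map_pow]
    _ ∣ Ideal.absNorm (Ideal.span {e}) := Ideal.absNorm_dvd_absNorm_of_le
        ((Ideal.span_singleton_le_iff_mem _).mpr hprod)
    _ = (Algebra.norm ℤ e).natAbs := Ideal.absNorm_span_singleton e

theorem eq_zero_of_forall_smul_mem_pow (hp : p.Prime) (hpP : (p : 𝓞 L) ∈ P)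
    (hstab : ∀ σ : Gal(L/ℚ), σ • P = P → σ = 1) {e : 𝓞 L} {N : ℕ}
    (he : ∀ σ : Gal(L/ℚ), σ • e ∈ P ^ N) (hbound : ∀ φ : L →+* ℂ, ‖φ e‖ < (p : ℝ) ^ N) :
    e = 0 := by
  by_contra he0
  have hle := Nat.le_of_dvd (Int.natAbs_pos.mpr (Algebra.norm_ne_zero_iff.mpr he0))
    (pow_finrank_dvd_natAbs_norm hp hpP hstab he)
  exact (natAbs_norm_lt_pow he0 hbound).not_ge (by exact_mod_cast hle)

end NumberField

section Cofactor

variable {A B : Type*} [CommRing A] [CommRing B]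

/-- The quotient of `f` by `X - a`. If `a` is a simple root of `f`, it is up to a constant factor
the Lagrange basis polynomial at `a` for the roots of `f`. -/
noncomputable def cofactor (f : ℤ[X]) (a : A) : A[X] := f.map (Int.castRingHom A) /ₘ (X - C a)

/-- The trilinear form with coefficients `J` in the coefficients of the cofactors of `f` at three
elements. When `J` is a `moment` of `ω`, it interpolates `ω` at the roots of `f`. -/
noncomputable def interpolant (f : ℤ[X]) (J : ℕ → ℕ → ℕ → ℤ) (x y z : A) : A :=
  ∑ k ∈ Finset.range f.natDegree, (cofactor f z).coeff k *
    ∑ j ∈ Finset.range f.natDegree, (cofactor f y).coeff j *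
      ∑ i ∈ Finset.range f.natDegree, (cofactor f x).coeff i * J i j k

/-- The product of the values of the cofactors of `f` at `x`, `y` and `z`, each at its own base
point; at roots these values are those of the derivative of `f`. -/
noncomputable def cofactorProd (f : ℤ[X]) (x y z : A) : A :=
  (cofactor f z).eval z * (cofactor f y).eval y * (cofactor f x).eval x

theorem map_intCast_map (φ : A →+* B) (f : ℤ[X]) :
    (f.map (Int.castRingHom A)).map φ = f.map (Int.castRingHom B) := by
  rw [Polynomial.map_map, RingHom.eq_intCast' (φ.comp (Int.castRingHom A))]

theorem cofactor_map (φ : A →+* B) (f : ℤ[X]) (a : A) :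
    (cofactor f a).map φ = cofactor f (φ a) := by
  rw [cofactor, map_divByMonic φ (monic_X_sub_C a), map_intCast_map, Polynomial.map_sub, map_X,
    map_C, cofactor]

theorem map_interpolant (φ : A →+* B) (f : ℤ[X]) (J : ℕ → ℕ → ℕ → ℤ) (x y z : A) :
    φ (interpolant f J x y z) = interpolant f J (φ x) (φ y) (φ z) := by
  simp only [interpolant, ← cofactor_map, coeff_map, map_sum, map_mul, map_intCast]

theorem map_cofactorProd (φ : A →+* B) (f : ℤ[X]) (x y z : A) :
    φ (cofactorProd f x y z) = cofactorProd f (φ x) (φ y) (φ z) := by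
  simp only [cofactorProd, map_mul, ← cofactor_map, eval_map, eval₂_at_apply]

variable {ι : Type*} [Fintype ι]

/-- The mixed power moments of the weights `ω` at the nodes `r`. -/
def moment (r : ι → A) (ω : ι → ι → ι → A) (i j k : ℕ) : A :=
  ∑ a, (∑ b, (∑ c, ω a b c * r c ^ k) * r b ^ j) * r a ^ i

theorem map_moment (φ : A →+* B) (r : ι → A) (ω : ι → ι → ι → A) (i j k : ℕ) :
    φ (moment r ω i j k) = moment (fun a => φ (r a)) (fun a b c => φ (ω a b c)) i j k := by
  simp only [moment, map_sum, map_mul, map_pow]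

theorem map_nodal (φ : A →+* B) (r : ι → A) :
    (Lagrange.nodal Finset.univ r).map φ = Lagrange.nodal Finset.univ fun a => φ (r a) := by
  simp only [Lagrange.nodal, Polynomial.map_prod, Polynomial.map_sub, map_X, map_C]

variable {f : ℤ[X]} {r : ι → A}

theorem cofactor_eq_nodal [DecidableEq ι]
    (hr : f.map (Int.castRingHom A) = Lagrange.nodal Finset.univ r) (a : ι) :
    cofactor f (r a) = Lagrange.nodal (Finset.univ.erase a) r := by
  rw [cofactor, hr, Lagrange.nodal_eq_mul_nodal_erase (Finset.mem_univ a),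
    mul_divByMonic_cancel_left _ (monic_X_sub_C _)]

theorem sum_coeff_cofactor_mul (hf : f.Monic)
    (hr : f.map (Int.castRingHom A) = Lagrange.nodal Finset.univ r) (u : ι → A) (a : ι) :
    ∑ i ∈ Finset.range f.natDegree, (cofactor f (r a)).coeff i * ∑ b, u b * r b ^ i =
      u a * (cofactor f (r a)).eval (r a) := by
  classical
  nontriviality A
  rw [cofactor_eq_nodal hr]
  have hdeg : (Lagrange.nodal (Finset.univ.erase a) r).natDegree < f.natDegree := by
    rw [← hf.natDegree_map (Int.castRingHom A), hr, Lagrange.natDegree_nodal,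
      Lagrange.natDegree_nodal]
    exact Finset.card_erase_lt_of_mem (Finset.mem_univ a)
  calc _ = ∑ b, u b * (Lagrange.nodal (Finset.univ.erase a) r).eval (r b) := by
        simp only [Finset.mul_sum, eval_eq_sum_range' hdeg, mul_left_comm (u _)]
        exact Finset.sum_comm
    _ = _ := Fintype.sum_eq_single a fun b hb => by
        rw [Lagrange.eval_nodal_at_node (Finset.mem_erase.mpr ⟨hb, Finset.mem_univ b⟩), mul_zero]

theorem interpolant_eq_mul_cofactorProd (hf : f.Monic)
    (hr : f.map (Int.castRingHom A) = Lagrange.nodal Finset.univ r) {J : ℕ → ℕ → ℕ → ℤ}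
    {ω : ι → ι → ι → A}
    (hJ : ∀ i < f.natDegree, ∀ j < f.natDegree, ∀ k < f.natDegree, (J i j k : A) = moment r ω i j k)
    (a b c : ι) :
    interpolant f J (r a) (r b) (r c) = ω a b c * cofactorProd f (r a) (r b) (r c) := by
  have hsum : interpolant f J (r a) (r b) (r c) =
      ∑ k ∈ Finset.range f.natDegree, (cofactor f (r c)).coeff k *
        ∑ j ∈ Finset.range f.natDegree, (cofactor f (r b)).coeff j *
          ∑ i ∈ Finset.range f.natDegree, (cofactor f (r a)).coeff i * moment r ω i j k := by
    refine Finset.sum_congr rfl fun k hk => congrArg _ <| Finset.sum_congr rfl fun j hj =>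
      congrArg _ <| Finset.sum_congr rfl fun i hi => congrArg _ ?_
    exact hJ i (Finset.mem_range.mp hi) j (Finset.mem_range.mp hj) k (Finset.mem_range.mp hk)
  simp only [hsum, moment, sum_coeff_cofactor_mul hf hr, ← mul_assoc, ← Finset.sum_mul,
    cofactorProd]

end Cofactor

section Bound

/-- A bound for the modulus of the `i`-th coefficient of the cofactor, at a complex number of
modulus at most `B`, of the polynomial of degree `n` with coefficients `c`. This bound and the two
derived from it take `c` and `n` instead of a polynomial so that the kernel can evaluate them. -/
def cofactorBound (c : ℕ → ℤ) (n B i : ℕ) : ℕ :=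
  ∑ j ∈ Finset.Icc (i + 1) n, B ^ (j - (i + 1)) * (c j).natAbs

/-- A bound for the modulus of the value at `z` of the cofactor at `z` of the polynomial of degree
`n` with coefficients `c`, for complex `z` of modulus at most `B`. -/
def evalCofactorBound (c : ℕ → ℤ) (n B : ℕ) : ℕ :=
  ∑ i ∈ Finset.range n, cofactorBound c n B i * B ^ i

/-- A bound for the modulus of `interpolant` at complex numbers of modulus at most `B`, for the
polynomial of degree `n` with coefficients `c`. -/
def interpolantBound (c : ℕ → ℤ) (n : ℕ) (J : ℕ → ℕ → ℕ → ℤ) (B : ℕ) : ℕ :=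
  ∑ k ∈ Finset.range n, cofactorBound c n B k * ∑ j ∈ Finset.range n, cofactorBound c n B j *
    ∑ i ∈ Finset.range n, cofactorBound c n B i * (J i j k).natAbs

variable {f : ℤ[X]} {B : ℕ}

theorem norm_le_of_isRoot (hf : f.Monic)
    (hB : ∑ i ∈ Finset.range f.natDegree, (f.coeff i).natAbs * B ^ i < B ^ f.natDegree)
    {z : ℂ} (hz : (f.map (Int.castRingHom ℂ)).IsRoot z) : ‖z‖ ≤ B := by
  by_contra! hlt
  set n := f.natDegree
  have hroot : z ^ n = -∑ i ∈ Finset.range n, (f.coeff i : ℂ) * z ^ i := by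
    have h := congrArg (fun g : ℤ[X] => (g.map (Int.castRingHom ℂ)).eval z) hf.as_sum
    simp only [hz.eq_zero, Polynomial.map_add, Polynomial.map_sum, eval_add, eval_finsetSum] at h
    simpa using eq_neg_of_add_eq_zero_left h.symm
  have hterm (i) (hi : i ∈ Finset.range n) : (B : ℝ) ^ n * ‖z‖ ^ i ≤ ‖z‖ ^ n * B ^ i := by
    obtain ⟨d, hd⟩ := Nat.exists_eq_add_of_le (Finset.mem_range.mp hi).le
    rw [hd, pow_add, pow_add, mul_right_comm, mul_right_comm (‖z‖ ^ i), mul_comm ((B : ℝ) ^ i)]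
    gcongr
  have hle : (B : ℝ) ^ n * ‖z‖ ^ n ≤ ‖z‖ ^ n * ∑ i ∈ Finset.range n, |(f.coeff i : ℝ)| * B ^ i :=
    calc (B : ℝ) ^ n * ‖z‖ ^ n = B ^ n * ‖∑ i ∈ Finset.range n, (f.coeff i : ℂ) * z ^ i‖ := by
          rw [← norm_pow, hroot, norm_neg]
      _ ≤ B ^ n * ∑ i ∈ Finset.range n, |(f.coeff i : ℝ)| * ‖z‖ ^ i := by
          gcongr
          refine norm_sum_le_of_le _ fun i _ => ?_
          rw [norm_mul, norm_pow, Complex.norm_intCast]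
      _ ≤ _ := by
          simp only [Finset.mul_sum, mul_left_comm _ |_|]
          exact Finset.sum_le_sum fun i hi => mul_le_mul_of_nonneg_left (hterm i hi) (abs_nonneg _)
  have hB' : ∑ i ∈ Finset.range n, |(f.coeff i : ℝ)| * (B : ℝ) ^ i < B ^ n := by
    have h := Nat.cast_lt (α := ℝ).mpr hB
    simpa [Nat.cast_natAbs] using h
  have hz0 : 0 < ‖z‖ ^ n := pow_pos ((Nat.cast_nonneg B).trans_lt hlt) n
  exact (hle.trans_lt (mul_lt_mul_of_pos_left hB' hz0)).ne (mul_comm _ _)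

theorem norm_coeff_cofactor_le {z : ℂ} (hz : ‖z‖ ≤ B) (i : ℕ) :
    ‖(cofactor f z).coeff i‖ ≤ cofactorBound f.coeff f.natDegree B i := by
  rw [cofactor, coeff_divByMonic_X_sub_C, natDegree_map_eq_of_injective (RingHom.injective_int _),
    cofactorBound, Nat.cast_sum]
  refine norm_sum_le_of_le _ fun j _ => ?_
  rw [norm_mul, norm_pow, coeff_map, eq_intCast, Complex.norm_intCast, Nat.cast_mul, Nat.cast_pow,
    Nat.cast_natAbs, Int.cast_abs]
  gcongr

theorem norm_eval_cofactor_le (hf : f.natDegree ≠ 0) {z : ℂ} (hz : ‖z‖ ≤ B) :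
    ‖(cofactor f z).eval z‖ ≤ evalCofactorBound f.coeff f.natDegree B := by
  have hdeg : (cofactor f z).natDegree < f.natDegree := by
    rw [cofactor, natDegree_divByMonic _ (monic_X_sub_C z), natDegree_X_sub_C,
      natDegree_map_eq_of_injective (RingHom.injective_int _)]
    exact Nat.sub_one_lt hf
  rw [eval_eq_sum_range' hdeg, evalCofactorBound, Nat.cast_sum]
  refine norm_sum_le_of_le _ fun i _ => ?_
  rw [norm_mul, norm_pow, Nat.cast_mul, Nat.cast_pow]
  gcongr
  exact norm_coeff_cofactor_le hz i

theorem norm_interpolant_le {J : ℕ → ℕ → ℕ → ℤ} {x y z : ℂ} (hx : ‖x‖ ≤ B) (hy : ‖y‖ ≤ B)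
    (hz : ‖z‖ ≤ B) :
    ‖interpolant f J x y z‖ ≤ interpolantBound f.coeff f.natDegree J B := by
  rw [interpolant, interpolantBound]
  push_cast
  refine norm_sum_le_of_le _ fun k _ => norm_mul_le_of_le (norm_coeff_cofactor_le hz k) ?_
  refine norm_sum_le_of_le _ fun j _ => norm_mul_le_of_le (norm_coeff_cofactor_le hy j) ?_
  refine norm_sum_le_of_le _ fun i _ => norm_mul_le_of_le (norm_coeff_cofactor_le hx i) ?_
  rw [Complex.norm_intCast, Nat.cast_natAbs, Int.cast_abs]

end Bound

section ApproximateRoots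

variable {A ι : Type*} [CommRing A] [Fintype ι] {g : A[X]}

theorem eq_nodal_of_forall_isRoot [IsDomain A] (hmonic : g.Monic)
    (hdeg : g.natDegree = Fintype.card ι) {x : ι → A} (hinj : Function.Injective x)
    (hroot : ∀ a, g.IsRoot (x a)) : g = Lagrange.nodal Finset.univ x := by
  refine eq_of_monic_of_dvd_of_natDegree_le Lagrange.nodal_monic hmonic ?_ ?_
  · have hle : Finset.univ.val.map x ≤ g.roots := by
      rw [Multiset.le_iff_subset (Finset.univ.nodup.map hinj)]
      intro y hy
      obtain ⟨a, -, rfl⟩ := Multiset.mem_map.mp hy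
      exact (mem_roots hmonic.ne_zero).mpr (hroot a)
    have hdvd := (Multiset.prod_X_sub_C_dvd_iff_le_roots hmonic.ne_zero _).mpr hle
    rwa [Multiset.map_map] at hdvd
  · rw [Lagrange.natDegree_nodal, Finset.card_univ, hdeg]

theorem eval_derivative_ne_zero_of_eq_nodal [IsDomain A] {x : ι → A} (hinj : Function.Injective x)
    (hg : g = Lagrange.nodal Finset.univ x) (a : ι) : g.derivative.eval (x a) ≠ 0 := by
  classical
  rw [hg, Lagrange.eval_nodal_derivative_eval_node_eq (Finset.mem_univ a)]
  exact Lagrange.eval_nodal_not_at_node fun b hb => hinj.ne (Finset.ne_of_mem_erase hb).symm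

theorem exists_eq_nodal_and_sub_mem_pow [IsDedekindDomain A] {P : Ideal A} [P.IsPrime]
    (hmonic : g.Monic) (hsplits : g.Splits) (hdeg : g.natDegree = Fintype.card ι) {n : ℕ}
    (hn : n ≠ 0) {r : ι → A} (hr : ∀ a, g.eval (r a) ∈ P ^ n)
    (hinj : ∀ a b, r a - r b ∈ P → a = b) :
    ∃ x : ι → A, g = Lagrange.nodal Finset.univ x ∧ ∀ a, x a - r a ∈ P ^ n := by
  have hmod_inj : Function.Injective fun a => Ideal.Quotient.mk P (r a) :=
    fun a b hab => hinj a b (Ideal.Quotient.eq.mp hab)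
  have hmod : g.map (Ideal.Quotient.mk P) =
      Lagrange.nodal Finset.univ fun a => Ideal.Quotient.mk P (r a) := by
    refine eq_nodal_of_forall_isRoot (hmonic.map _) ((hmonic.natDegree_map _).trans hdeg) hmod_inj
      fun a => ?_
    rw [IsRoot.def, eval_map, eval₂_at_apply, Ideal.Quotient.eq_zero_iff_mem]
    exact Ideal.pow_le_self hn (hr a)
  have hder (a : ι) : g.derivative.eval (r a) ∉ P := by
    rw [← Ideal.Quotient.eq_zero_iff_mem, ← eval₂_at_apply, ← eval_map, ← derivative_map]
    exact eval_derivative_ne_zero_of_eq_nodal hmod_inj hmod a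
  choose x hroot hx using fun a => exists_isRoot_sub_mem_pow hsplits hmonic hn (hr a) (hder a)
  refine ⟨x, eq_nodal_of_forall_isRoot hmonic hdeg (fun a b hab => hinj a b ?_) hroot,
    fun a => sub_mem_comm_iff.mp (hx a)⟩
  rw [← sub_sub_sub_cancel_right _ _ (x a)]
  exact P.sub_mem (Ideal.pow_le_self hn (hx a)) (Ideal.pow_le_self hn (hab ▸ hx b))

end ApproximateRoots

section Bound

theorem norm_interpolant_sq_sub_le {f : ℤ[X]} {B : ℕ} (hf : f.natDegree ≠ 0)
    {J : ℕ → ℕ → ℕ → ℤ} (m : ℤ) {x y z : ℂ} (hx : ‖x‖ ≤ B) (hy : ‖y‖ ≤ B) (hz : ‖z‖ ≤ B) :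
    ‖interpolant f J x y z ^ 2 - m * cofactorProd f x y z ^ 2‖ ≤
      interpolantBound f.coeff f.natDegree J B ^ 2 +
        m.natAbs * evalCofactorBound f.coeff f.natDegree B ^ 6 := by
  have hprod : ‖cofactorProd f x y z‖ ≤ evalCofactorBound f.coeff f.natDegree B ^ 3 := by
    rw [cofactorProd, pow_succ, pow_two]
    exact norm_mul_le_of_le (norm_mul_le_of_le (norm_eval_cofactor_le hf hz)
      (norm_eval_cofactor_le hf hy)) (norm_eval_cofactor_le hf hx)
  refine norm_sub_le_of_le ?_ ?_
  · rw [norm_pow]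
    gcongr
    exact norm_interpolant_le hx hy hz
  · rw [norm_mul, norm_pow, Complex.norm_intCast, Nat.cast_natAbs, Int.cast_abs, pow_mul _ 3 2]
    gcongr

end Bound

section Congruence

section Smul

variable {A G : Type*} [CommRing A] [Group G] [MulSemiringAction G A] (g : G) (f : ℤ[X])
  (x y z : A)

theorem smul_interpolant (J : ℕ → ℕ → ℕ → ℤ) :
    g • interpolant f J x y z = interpolant f J (g • x) (g • y) (g • z) :=
  map_interpolant (MulSemiringAction.toRingHom G A g) f J x y z

theorem smul_cofactorProd :
    g • cofactorProd f x y z = cofactorProd f (g • x) (g • y) (g • z) :=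
  map_cofactorProd (MulSemiringAction.toRingHom G A g) f x y z

theorem smul_intCast_eq (m : ℤ) : g • (m : A) = m :=
  map_intCast (MulSemiringAction.toRingHom G A g) m

end Smul

theorem intCast_sub_mem_of_modEq {A : Type*} [CommRing A] {I : Ideal A} {M m n : ℤ}
    (hM : (M : A) ∈ I) (h : m ≡ n [ZMOD M]) : (m - n : A) ∈ I := by
  obtain ⟨q, hq⟩ := h.symm.dvd
  rw [← Int.cast_sub, hq, Int.cast_mul]
  exact I.mul_mem_right _ hM

open Pointwise in
theorem eq_one_of_smul_eq_self {A ι G : Type*} [CommRing A] [Group G] [MulSemiringAction G A]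
    {x : ι → A} {P : Ideal A} (hinj : ∀ a b, x a - x b ∈ P → a = b) {r : ι → ℤ}
    (hr : ∀ a, x a - r a ∈ P) {ψ : G →* Equiv.Perm ι} (hψ : Function.Injective ψ)
    (hx : ∀ g a, g • x a = x (ψ g a)) {g : G} (hg : g • P = P) : g = 1 := by
  refine (injective_iff_map_eq_one ψ).mp hψ g (Equiv.Perm.ext fun a => hinj _ _ ?_)
  have hmem := Ideal.smul_mem_pointwise_smul g _ P (hr a)
  rw [hg, smul_sub, smul_intCast_eq, hx] at hmem
  simpa using P.sub_mem hmem (hr a)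

variable {A ι : Type*} [CommRing A] [Fintype ι] {x : ι → A}

theorem interpolant_sub_mem {f : ℤ[X]} (hf : f.Monic)
    (hx : f.map (Int.castRingHom A) = Lagrange.nodal Finset.univ x) {I : Ideal A} {r : ι → ℤ}
    (hr : ∀ a, x a - r a ∈ I) {M : ℤ} (hM : (M : A) ∈ I) {ω : ι → ι → ι → ℤ}
    {J : ℕ → ℕ → ℕ → ℤ} (hJ : ∀ i < f.natDegree, ∀ j < f.natDegree, ∀ k < f.natDegree,
      J i j k ≡ moment r ω i j k [ZMOD M]) (a b c : ι) :
    interpolant f J (x a) (x b) (x c) - ω a b c * cofactorProd f (x a) (x b) (x c) ∈ I := by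
  have hmk (a : ι) : Ideal.Quotient.mk I (x a) = r a :=
    (Ideal.Quotient.eq.mpr (hr a)).trans (map_intCast _ _)
  have hnodal : f.map (Int.castRingHom (A ⧸ I)) =
      Lagrange.nodal Finset.univ fun a => Ideal.Quotient.mk I (x a) := by
    rw [← map_nodal, ← hx, map_intCast_map]
  rw [← Ideal.Quotient.eq_zero_iff_mem, map_sub, map_mul, map_interpolant, map_cofactorProd,
    map_intCast, sub_eq_zero]
  refine interpolant_eq_mul_cofactorProd hf hnodal (ω := fun a b c => ω a b c)
    (fun i hi j hj k hk => ?_) a b c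
  have hcong := intCast_sub_mem_of_modEq hM (hJ i hi j hj k hk)
  rw [← Ideal.Quotient.eq_zero_iff_mem, map_sub, sub_eq_zero, map_intCast, map_intCast,
    ← eq_intCast (Int.castRingHom _) (moment ..), map_moment] at hcong
  simpa only [hmk, eq_intCast] using hcong

theorem cofactorProd_notMem {f : ℤ[X]}
    (hx : f.map (Int.castRingHom A) = Lagrange.nodal Finset.univ x) {P : Ideal A} [P.IsPrime]
    (hinj : ∀ a b, x a - x b ∈ P → a = b) (a b c : ι) :
    cofactorProd f (x a) (x b) (x c) ∉ P := by
  classical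
  have heval (a : ι) : (cofactor f (x a)).eval (x a) ∉ P := by
    rw [cofactor_eq_nodal hx, Lagrange.eval_nodal]
    intro h
    obtain ⟨b, hb, hab⟩ := Ideal.IsPrime.prod_mem_iff.mp h
    exact Finset.ne_of_mem_erase hb (hinj a b hab).symm
  exact P.primeCompl.mul_mem (P.primeCompl.mul_mem (heval c) (heval b)) (heval a)

theorem interpolant_sq_sub_mem {f : ℤ[X]} (hf : f.Monic)
    (hx : f.map (Int.castRingHom A) = Lagrange.nodal Finset.univ x) {I : Ideal A} {r : ι → ℤ}
    (hr : ∀ a, x a - r a ∈ I) {M : ℤ} (hM : (M : A) ∈ I) {ω : ι → ι → ι → ℤ}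
    {J : ℕ → ℕ → ℕ → ℤ} (hJ : ∀ i < f.natDegree, ∀ j < f.natDegree, ∀ k < f.natDegree,
      J i j k ≡ moment r ω i j k [ZMOD M]) {m : ℤ} {a b c : ι}
    (hω : ω a b c ^ 2 ≡ m [ZMOD M]) :
    interpolant f J (x a) (x b) (x c) ^ 2 - m * cofactorProd f (x a) (x b) (x c) ^ 2 ∈ I := by
  set F := interpolant f J (x a) (x b) (x c)
  set D := cofactorProd f (x a) (x b) (x c)
  have hF : F - ω a b c * D ∈ I := interpolant_sub_mem hf hx hr hM hJ a b c
  have hsq : ((ω a b c : A) ^ 2 - m) ∈ I := by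
    simpa using intCast_sub_mem_of_modEq hM hω
  convert I.add_mem (I.mul_mem_left (F + ω a b c * D) hF) (I.mul_mem_right (D ^ 2) hsq) using 1
  ring

end Congruence

section SquareRoot

theorem eq_mul_mul_of_sq_eq {A : Type*} [CommRing A] [IsDomain A] {P : Ideal A} [P.IsPrime]
    {F D t s : A} {ε : ℤ} (hε : ε = 0 ∨ ε = 1 ∨ ε = -1) (hsq : F ^ 2 = (ε * t * D) ^ 2)
    (hD : D ∉ P) (hs : 2 * s ∉ P) (ht : t - s ∈ P) (hF : F - ε * s * D ∈ P) :
    F = ε * t * D := by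
  rcases eq_or_ne ε 0 with rfl | h0
  · simpa using hsq
  refine (sq_eq_sq_iff_eq_or_eq_neg.mp hsq).resolve_right fun hneg => ?_
  have hunit : (ε : A) ∉ P := by
    have hone : (1 : A) ∉ P := P.ne_top_iff_one.mp Ideal.IsPrime.ne_top'
    rcases hε.resolve_left h0 with rfl | rfl <;> simpa using hone
  have hmem : (ε : A) * (2 * s) * D ∈ P := by
    have hadd := P.add_mem hF (P.mul_mem_left (ε * D) ht)
    rw [hneg] at hadd
    convert P.neg_mem hadd using 1
    ring
  exact P.primeCompl.mul_mem (P.primeCompl.mul_mem hunit hs) hD hmem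

theorem exists_sq_eq_and_forall_eq_mul {A κ : Type*} [CommRing A] [IsDomain A]
    [IsIntegrallyClosed A] {P : Ideal A} [P.IsPrime] {F D : κ → A} {ε : κ → ℤ} {s d : A}
    (hε : ∀ i, ε i = 0 ∨ ε i = 1 ∨ ε i = -1) (hε1 : ∃ i, ε i = 1) (hs : 2 * s ∉ P)
    (hD : ∀ i, D i ∉ P) (hF : ∀ i, F i - ε i * s * D i ∈ P)
    (hsq : ∀ i, F i ^ 2 = d * ε i ^ 2 * D i ^ 2) :
    ∃ t, t ^ 2 = d ∧ ∀ i, F i = ε i * t * D i := by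
  obtain ⟨i, hi⟩ := hε1
  have hsqi := hsq i
  have hFi := hF i
  simp only [hi, Int.cast_one, one_pow, mul_one, one_mul] at hsqi hFi
  obtain ⟨t, ht⟩ : D i ∣ F i :=
    (IsIntegrallyClosed.pow_dvd_pow_iff two_ne_zero).mp (hsqi ▸ dvd_mul_left _ _)
  have htd : t ^ 2 = d := by
    have hDi : D i ^ 2 ≠ 0 := pow_ne_zero 2 fun h => hD i (h ▸ P.zero_mem)
    rw [ht, mul_pow, mul_comm] at hsqi
    exact mul_right_cancel₀ hDi hsqi
  have hts : t - s ∈ P := by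
    rw [ht, mul_comm, ← sub_mul] at hFi
    exact (Ideal.IsPrime.mem_or_mem ‹_› hFi).resolve_right (hD i)
  refine ⟨t, htd, fun j => eq_mul_mul_of_sq_eq (hε j) ?_ (hD j) hs hts (hF j)⟩
  rw [hsq, ← htd]
  ring

end SquareRoot

section NumberField

open NumberField Pointwise

variable {L ι : Type*} [Field L] [NumberField L] [IsGalois ℚ L] [Fintype ι]
  {f : ℤ[X]} {P : Ideal (𝓞 L)} [P.IsPrime] {p N : ℕ} {x : ι → 𝓞 L}
  {r : ι → ℤ} {J : ℕ → ℕ → ℕ → ℤ} {B : ℕ} {ψ : Gal(L/ℚ) →* Equiv.Perm ι}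

theorem interpolant_sq_eq (hf : f.Monic) (hdeg : f.natDegree ≠ 0)
    (hx : f.map (Int.castRingHom (𝓞 L)) = Lagrange.nodal Finset.univ x) (hp : p.Prime)
    (hpP : (p : 𝓞 L) ∈ P) (hstab : ∀ σ : Gal(L/ℚ), σ • P = P → σ = 1)
    (hψ : ∀ (σ : Gal(L/ℚ)) a, σ • x a = x (ψ σ a)) (hr : ∀ a, x a - r a ∈ P ^ N)
    {ω : ι → ι → ι → ℤ} (hJ : ∀ i < f.natDegree, ∀ j < f.natDegree, ∀ k < f.natDegree,
      J i j k ≡ moment r ω i j k [ZMOD (p ^ N : ℕ)])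
    (hB : ∀ (φ : 𝓞 L →+* ℂ) a, ‖φ (x a)‖ ≤ B) {m : ℤ}
    (hbound : interpolantBound f.coeff f.natDegree J B ^ 2 +
      m.natAbs * evalCofactorBound f.coeff f.natDegree B ^ 6 < p ^ N)
    {a b c : ι} (hω : ∀ σ : Gal(L/ℚ), ω (ψ σ a) (ψ σ b) (ψ σ c) ^ 2 ≡ m [ZMOD (p ^ N : ℕ)]) :
    interpolant f J (x a) (x b) (x c) ^ 2 = m * cofactorProd f (x a) (x b) (x c) ^ 2 := by
  have hpN : (((p ^ N : ℕ) : ℤ) : 𝓞 L) ∈ P ^ N := by simpa using Ideal.pow_mem_pow hpP N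
  refine sub_eq_zero.mp (eq_zero_of_forall_smul_mem_pow hp hpP hstab (N := N) (fun σ => ?_)
    fun φ => ?_)
  · rw [smul_sub, smul_mul', smul_pow', smul_pow', smul_interpolant, smul_cofactorProd,
      smul_intCast_eq]
    simp only [hψ]
    exact interpolant_sq_sub_mem hf hx hr hpN hJ (hω σ)
  · set Φ := φ.comp (algebraMap (𝓞 L) L)
    change ‖Φ _‖ < _
    rw [map_sub, map_mul, map_pow, map_pow, map_intCast, map_interpolant, map_cofactorProd]
    exact (norm_interpolant_sq_sub_le hdeg m (hB Φ a) (hB Φ b) (hB Φ c)).trans_lt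
      (by exact_mod_cast hbound)

theorem exists_sq_eq_and_forall_mul_smul_eq (hf : f.Monic) (hdeg : f.natDegree ≠ 0)
    (hx : f.map (Int.castRingHom (𝓞 L)) = Lagrange.nodal Finset.univ x) (hp : p.Prime)
    (hpP : (p : 𝓞 L) ∈ P) (hN : N ≠ 0) (hinj : ∀ a b, x a - x b ∈ P → a = b)
    (hψ : Function.Injective ψ) (hψx : ∀ (σ : Gal(L/ℚ)) a, σ • x a = x (ψ σ a))
    (hr : ∀ a, x a - r a ∈ P ^ N) {s d : ℤ} (hs : s ^ 2 ≡ d [ZMOD (p ^ N : ℕ)])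
    (hpd : ¬(p : ℤ) ∣ 2 * d) {χ : ι → ι → ι → ℤ}
    (hχ : ∀ a b c, χ a b c = 0 ∨ χ a b c = 1 ∨ χ a b c = -1)
    (hχψ : ∀ (π : Equiv.Perm ι) a b c, χ (π a) (π b) (π c) ^ 2 = χ a b c ^ 2)
    (hχ1 : ∃ a b c, χ a b c = 1)
    (hJ : ∀ i < f.natDegree, ∀ j < f.natDegree, ∀ k < f.natDegree,
      J i j k ≡ moment r (fun a b c => s * χ a b c) i j k [ZMOD (p ^ N : ℕ)])
    (hB : ∀ (φ : 𝓞 L →+* ℂ) a, ‖φ (x a)‖ ≤ B)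
    (hbound : interpolantBound f.coeff f.natDegree J B ^ 2 +
      d.natAbs * evalCofactorBound f.coeff f.natDegree B ^ 6 < p ^ N) :
    ∃ t : 𝓞 L, t ^ 2 = d ∧ ∀ (σ : Gal(L/ℚ)) a b c,
      χ a b c * σ • t = χ (ψ σ a) (ψ σ b) (ψ σ c) * t := by
  have hPN : P ^ N ≤ P := Ideal.pow_le_self hN
  have hpN : (((p ^ N : ℕ) : ℤ) : 𝓞 L) ∈ P ^ N := by simpa using Ideal.pow_mem_pow hpP N
  have hsP : 2 * (s : 𝓞 L) ∉ P := fun h => hpd <| by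
    refine dvd_of_intCast_mem Ideal.IsPrime.ne_top' hp hpP ?_
    have hmem := P.sub_mem (P.mul_mem_right (s : 𝓞 L) h)
      (P.mul_mem_left 2 (hPN (intCast_sub_mem_of_modEq hpN hs)))
    push_cast at hmem ⊢
    convert hmem using 1
    ring
  have hstab (σ : Gal(L/ℚ)) (hσ : σ • P = P) : σ = 1 :=
    eq_one_of_smul_eq_self hinj (fun a => hPN (hr a)) hψ hψx hσ
  have hmod (q : ι × ι × ι) : interpolant f J (x q.1) (x q.2.1) (x q.2.2) -
      χ q.1 q.2.1 q.2.2 * s * cofactorProd f (x q.1) (x q.2.1) (x q.2.2) ∈ P := by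
    simpa [mul_comm] using hPN (interpolant_sub_mem hf hx hr hpN hJ q.1 q.2.1 q.2.2)
  have hsq (q : ι × ι × ι) : interpolant f J (x q.1) (x q.2.1) (x q.2.2) ^ 2 =
      d * χ q.1 q.2.1 q.2.2 ^ 2 * cofactorProd f (x q.1) (x q.2.1) (x q.2.2) ^ 2 := by
    have hχd : (d * χ q.1 q.2.1 q.2.2 ^ 2).natAbs ≤ d.natAbs := by
      rcases hχ q.1 q.2.1 q.2.2 with h | h | h <;> simp [h]
    refine (interpolant_sq_eq hf hdeg hx hp hpP hstab hψx hr hJ hB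
      (m := d * χ q.1 q.2.1 q.2.2 ^ 2) (hbound.trans_le' (by gcongr)) fun σ => ?_).trans
      (by push_cast; rfl)
    rw [mul_pow, hχψ]
    exact hs.mul_right _
  obtain ⟨a₀, b₀, c₀, h₀⟩ := hχ1
  obtain ⟨t, htd, ht⟩ := exists_sq_eq_and_forall_eq_mul (fun q : ι × ι × ι => hχ q.1 q.2.1 q.2.2)
    ⟨(a₀, b₀, c₀), h₀⟩ hsP (fun q => cofactorProd_notMem hx hinj q.1 q.2.1 q.2.2) hmod hsq
  refine ⟨t, htd, fun σ a b c => ?_⟩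
  have hσ := congrArg (σ • ·) (ht (a, b, c))
  simp only [smul_mul', smul_interpolant, smul_cofactorProd, smul_intCast_eq, hψx] at hσ
  exact mul_right_cancel₀ (fun h => cofactorProd_notMem hx hinj _ _ _ (h ▸ P.zero_mem))
    (hσ.symm.trans (ht (ψ σ a, ψ σ b, ψ σ c)))

end NumberField

section GaloisAction

theorem exists_perm_smul_eq {A G ι : Type*} [CommRing A] [IsDomain A] [Group G]
    [MulSemiringAction G A] [Fintype ι] {f : ℤ[X]} {x : ι → A} (hinj : Function.Injective x)
    (hx : f.map (Int.castRingHom A) = Lagrange.nodal Finset.univ x) :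
    ∃ ψ : G →* Equiv.Perm ι, ∀ g a, g • x a = x (ψ g a) := by
  have hstable (g : G) {y : A} (hy : y ∈ Set.range x) : g • y ∈ Set.range x := by
    obtain ⟨a, rfl⟩ := hy
    have heval := congrArg (MulSemiringAction.toRingHom G A g)
      (Lagrange.eval_nodal_at_node (v := x) (Finset.mem_univ a))
    rw [← hx, map_zero, ← eval₂_at_apply, ← eval_map, map_intCast_map, hx, Lagrange.eval_nodal,
      Finset.prod_eq_zero_iff] at heval
    obtain ⟨b, -, hb⟩ := heval
    exact ⟨b, (sub_eq_zero.mp hb).symm⟩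
  let S : SubMulAction G A := ⟨Set.range x, hstable⟩
  let e : ι ≃ S := Equiv.ofInjective x hinj
  refine ⟨e.symm.permCongrHom.toMonoidHom.comp (MulAction.toPermHom G S), fun g a => ?_⟩
  exact (congrArg Subtype.val (e.apply_symm_apply (g • e a))).symm

end GaloisAction

section Frobenius

open NumberField

theorem exists_intCast_sub_mem_of_pow_sub_mem {A : Type*} [CommRing A] {Q : Ideal A} [Q.IsMaximal]
    {p : ℕ} (hp : p.Prime) (hpQ : (p : A) ∈ Q) {y : A} (hy : y ^ p - y ∈ Q) :
    ∃ n : ℤ, y - n ∈ Q := by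
  let _ := Ideal.Quotient.field Q
  have : Fact p.Prime := ⟨hp⟩
  have : CharP (A ⧸ Q) p := (CharP.charP_iff_prime_eq_zero hp).mpr
    ((map_natCast _ p).symm.trans (Ideal.Quotient.eq_zero_iff_mem.mpr hpQ))
  have hmem : Ideal.Quotient.mk Q y ∈ (⊥ : Subfield (A ⧸ Q)) := by
    rw [Subfield.mem_bot_iff_pow_eq_self _ p, ← map_pow]
    exact Ideal.Quotient.eq.mpr hy
  obtain ⟨n, hn⟩ := (mem_bot_iff_intCast p _).mp hmem
  exact ⟨n, Ideal.Quotient.eq.mp (hn.symm.trans (map_intCast _ n).symm)⟩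

theorem eval_derivative_mem_of_sub_mem {A ι : Type*} [CommRing A] [Fintype ι] {x : ι → A}
    {Q : Ideal A} {y : A} {a b : ι} (hab : a ≠ b) (ha : y - x a ∈ Q) (hb : y - x b ∈ Q) :
    (Lagrange.nodal Finset.univ x).derivative.eval y ∈ Q := by
  classical
  rw [Lagrange.derivative_nodal, eval_finsetSum]
  refine Q.sum_mem fun i _ => ?_
  rw [Lagrange.eval_nodal]
  rcases eq_or_ne a i with rfl | hai
  · exact Q.prod_mem (Finset.mem_erase.mpr ⟨hab.symm, Finset.mem_univ b⟩) hb
  · exact Q.prod_mem (Finset.mem_erase.mpr ⟨hai, Finset.mem_univ a⟩) ha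

theorem dvd_eval_iff_exists_sub_mem {A ι : Type*} [CommRing A] [Fintype ι] {f : ℤ[X]} {x : ι → A}
    (hx : f.map (Int.castRingHom A) = Lagrange.nodal Finset.univ x) {Q : Ideal A} [Q.IsPrime]
    {p : ℕ} (hp : p.Prime) (hpQ : (p : A) ∈ Q) {n : ℤ} :
    (p : ℤ) ∣ f.eval n ↔ ∃ a, x a - n ∈ Q := by
  have heval : ((f.eval n : ℤ) : A) = ∏ a, ((n : A) - x a) := by
    rw [← Lagrange.eval_nodal, ← hx, eval_intCast_map, eq_intCast, Int.cast_id]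
  have hprod : ((f.eval n : ℤ) : A) ∈ Q ↔ ∃ a, x a - n ∈ Q := by
    simp only [heval, Ideal.IsPrime.prod_mem_iff, Finset.mem_univ, true_and, sub_mem_comm_iff]
  rw [← hprod]
  refine ⟨fun ⟨q, hq⟩ => ?_, dvd_of_intCast_mem Ideal.IsPrime.ne_top' hp hpQ⟩
  rw [hq, Int.cast_mul, Int.cast_natCast]
  exact Q.mul_mem_right _ hpQ

variable {L : Type*} [Field L] [NumberField L]

theorem exists_isMaximal_natCast_mem {p : ℕ} (hp : p.Prime) :
    ∃ Q : Ideal (𝓞 L), Q.IsMaximal ∧ (p : 𝓞 L) ∈ Q ∧ Nat.card (ℤ ⧸ Q.under ℤ) = p := by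
  have hprime : Prime (p : ℤ) := Nat.prime_iff_prime_int.mp hp
  have : (Ideal.span {(p : ℤ)}).IsMaximal :=
    PrincipalIdealRing.isMaximal_of_irreducible hprime.irreducible
  obtain ⟨Q, hQ, hover⟩ := Ideal.exists_maximal_ideal_liesOver_of_isIntegral (S := 𝓞 L)
    (Ideal.span {(p : ℤ)})
  refine ⟨Q, hQ, ?_, ?_⟩
  · have hmem := (Ideal.mem_of_liesOver Q (Ideal.span {(p : ℤ)}) p).mp
      (Ideal.mem_span_singleton_self _)
    simpa using hmem
  · rw [← hover.over, Nat.card_congr (Int.quotientSpanNatEquivZMod p).toEquiv, Nat.card_zmod]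

variable [IsGalois ℚ L]

theorem exists_forall_smul_sub_pow_mem {p : ℕ} (hp : p.Prime) :
    ∃ (Q : Ideal (𝓞 L)) (σ : Gal(L/ℚ)), Q.IsMaximal ∧ (p : 𝓞 L) ∈ Q ∧ ∀ y, σ • y - y ^ p ∈ Q := by
  obtain ⟨Q, hQ, hpQ, hcard⟩ := exists_isMaximal_natCast_mem (L := L) hp
  obtain ⟨σ, hσ⟩ := IsArithFrobAt.exists_of_isInvariant ℤ Gal(L/ℚ) Q
  exact ⟨Q, σ, hQ, hpQ, fun y => by simpa [hcard] using hσ y⟩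

theorem exists_apply_eq_self_iff_eq {ι : Type*} [Fintype ι] {f : ℤ[X]}
    {x : ι → 𝓞 L} (hx : f.map (Int.castRingHom (𝓞 L)) = Lagrange.nodal Finset.univ x)
    {ψ : Gal(L/ℚ) →* Equiv.Perm ι} (hψ : ∀ (σ : Gal(L/ℚ)) a, σ • x a = x (ψ σ a)) {p : ℕ}
    (hp : p.Prime) {m : ℤ} (hroot : ∀ n, (p : ℤ) ∣ f.eval n ↔ n ≡ m [ZMOD p])
    (hder : ¬(p : ℤ) ∣ f.derivative.eval m) :
    ∃ (σ : Gal(L/ℚ)) (a : ι), ∀ b, ψ σ b = b ↔ b = a := by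
  obtain ⟨Q, σ, hQ, hpQ, hσ⟩ := exists_forall_smul_sub_pow_mem (L := L) hp
  obtain ⟨a, ha⟩ := (dvd_eval_iff_exists_sub_mem hx hp hpQ).mp ((hroot m).mpr rfl)
  have eq_of_sub_mem {b : ι} (hb : x b - m ∈ Q) : b = a := by
    by_contra hba
    have hmem :=
      eval_derivative_mem_of_sub_mem hba (sub_mem_comm_iff.mp hb) (sub_mem_comm_iff.mp ha)
    rw [← hx, derivative_map, eval_intCast_map] at hmem
    exact hder (dvd_of_intCast_mem Ideal.IsPrime.ne_top' hp hpQ hmem)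
  refine ⟨σ, a, fun b => ⟨fun hb => eq_of_sub_mem ?_, ?_⟩⟩
  · have hpow := hσ (x b)
    rw [hψ, hb, sub_mem_comm_iff] at hpow
    obtain ⟨n, hn⟩ := exists_intCast_sub_mem_of_pow_sub_mem hp hpQ hpow
    have hnm := (hroot n).mp ((dvd_eval_iff_exists_sub_mem hx hp hpQ).mpr ⟨b, hn⟩)
    simpa using Q.add_mem hn (intCast_sub_mem_of_modEq (by simpa using hpQ) hnm)
  · rintro rfl
    have hmem := Q.add_mem (hσ (x b - m)) (Q.pow_mem_of_mem ha p hp.pos)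
    rw [sub_add_cancel, smul_sub, smul_intCast_eq, hψ] at hmem
    exact eq_of_sub_mem hmem

end Frobenius

section RootLabelling

open NumberField

variable {ι : Type*} [Fintype ι] {f : ℤ[X]}

theorem norm_apply_le_of_map_eq_nodal {A : Type*} [CommRing A] (hf : f.Monic) {x : ι → A}
    (hx : f.map (Int.castRingHom A) = Lagrange.nodal Finset.univ x) {B : ℕ}
    (hB : ∑ i ∈ Finset.range f.natDegree, (f.coeff i).natAbs * B ^ i < B ^ f.natDegree)
    (φ : A →+* ℂ) (a : ι) : ‖φ (x a)‖ ≤ B := by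
  refine norm_le_of_isRoot hf hB ?_
  rw [← map_intCast_map φ, IsRoot.def, eval_map, eval₂_at_apply, hx,
    Lagrange.eval_nodal_at_node (Finset.mem_univ a), map_zero]

variable {L : Type*} [Field L] [NumberField L]

theorem splits_map_ringOfIntegers (hf : f.Monic) (hsplits : (f.map (Int.castRingHom L)).Splits) :
    (f.map (Int.castRingHom (𝓞 L))).Splits := by
  have hmap := map_intCast_map (algebraMap (𝓞 L) L) f
  refine Splits.of_splits_map_of_injective RingOfIntegers.coe_injective (hmap ▸ hsplits)
    fun y hy => ?_
  rw [hmap, mem_roots_map_of_injective (Int.castRingHom L).injective_int hf.ne_zero] at hy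
  exact ⟨⟨y, f, hf, hy⟩, rfl⟩

theorem exists_map_eq_nodal_and_sub_intCast_mem_pow (hf : f.Monic)
    (hsplits : (f.map (Int.castRingHom L)).Splits) (hdeg : f.natDegree = Fintype.card ι)
    {P : Ideal (𝓞 L)} [P.IsPrime] {p : ℕ} (hp : p.Prime) (hpP : (p : 𝓞 L) ∈ P) {N : ℕ}
    (hN : N ≠ 0) {r : ι → ℤ} (hr : ∀ a, f.eval (r a) ≡ 0 [ZMOD (p ^ N : ℕ)])
    (hrp : ∀ a b, r a ≡ r b [ZMOD p] → a = b) :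
    ∃ x : ι → 𝓞 L, f.map (Int.castRingHom (𝓞 L)) = Lagrange.nodal Finset.univ x ∧
      (∀ a, x a - r a ∈ P ^ N) ∧ ∀ a b, x a - x b ∈ P → a = b := by
  have hinj (a b : ι) (hab : (r a : 𝓞 L) - r b ∈ P) : a = b := by
    rw [← Int.cast_sub] at hab
    exact hrp a b (Int.modEq_iff_dvd.mpr (dvd_of_intCast_mem Ideal.IsPrime.ne_top' hp hpP hab)).symm
  obtain ⟨x, hx, hxr⟩ := exists_eq_nodal_and_sub_mem_pow (hf.map _)
    (splits_map_ringOfIntegers hf hsplits) ((hf.natDegree_map _).trans hdeg) hN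
    (fun a => by
      rw [eval_intCast_map, eq_intCast, Int.cast_id]
      simpa using intCast_sub_mem_of_modEq (by simpa using Ideal.pow_mem_pow hpP N) (hr a)) hinj
  refine ⟨x, hx, hxr, fun a b hab => hinj a b ?_⟩
  have hmem (c : ι) : x c - r c ∈ P := Ideal.pow_le_self hN (hxr c)
  have := P.sub_mem (P.add_mem hab (hmem b)) (hmem a)
  convert this using 1
  ring

theorem exists_intCast_eq_of_forall_smul_eq [IsGalois ℚ L] {y : 𝓞 L}
    (hy : ∀ σ : Gal(L/ℚ), σ • y = y) : ∃ n : ℤ, y = n := by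
  obtain ⟨n, hn⟩ := Algebra.IsInvariant.isInvariant (A := ℤ) y hy
  exact ⟨n, hn.symm⟩

theorem injective_of_forall_smul_eq (L : Type*) [Field L] [NumberField L]
    [IsSplittingField ℚ L (f.map (Int.castRingHom ℚ))] {x : ι → 𝓞 L}
    (hx : f.map (Int.castRingHom (𝓞 L)) = Lagrange.nodal Finset.univ x)
    {ψ : Gal(L/ℚ) →* Equiv.Perm ι} (hψ : ∀ (σ : Gal(L/ℚ)) a, σ • x a = x (ψ σ a)) :
    Function.Injective ψ := by
  intro σ τ hστ
  refine AlgEquiv.coe_toAlgHom_injective (AlgHom.ext_of_adjoin_eq_top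
    (IsSplittingField.adjoin_rootSet L (f.map (Int.castRingHom ℚ))) fun y hy => ?_)
  have hroot := (mem_rootSet.mp hy).2
  rw [aeval_def, ← eval_map, map_intCast_map, ← map_intCast_map (algebraMap (𝓞 L) L), hx,
    Lagrange.nodal, Polynomial.map_prod, eval_prod,
    Finset.prod_eq_zero_iff] at hroot
  obtain ⟨a, -, ha⟩ := hroot
  rw [Polynomial.map_sub, map_X, map_C, eval_sub, eval_X, eval_C, sub_eq_zero] at ha
  have hsmul := congrArg (algebraMap (𝓞 L) L) ((hψ σ a).trans ((hστ ▸ hψ τ a).symm))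
  rw [ha]
  exact hsmul

end RootLabelling

section QuadraticSubfield

open NumberField OnePoint MatrixGroups

variable {L ι : Type*} [Field L] [NumberField L]

theorem smul_eq_intCast_mul_of_sq_eq {d : ℤ} {t : 𝓞 L} (ht : t ^ 2 = d) (σ : Gal(L/ℚ)) :
    ∃ ε : ℤ, σ • t = ε * t := by
  have hsq : (σ • t) ^ 2 = t ^ 2 := by rw [← smul_pow', ht, smul_intCast_eq]
  rcases sq_eq_sq_iff_eq_or_eq_neg.mp hsq with h | h
  · exact ⟨1, by rw [h, Int.cast_one, one_mul]⟩
  · exact ⟨-1, by rw [h, Int.cast_neg, Int.cast_one, neg_one_mul]⟩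

variable [IsGalois ℚ L]

theorem exists_apply_ne_of_forall_eval_ne_zero [Fintype ι] {f : ℤ[X]}
    (hroot : ∀ n, f.eval n ≠ 0) {x : ι → 𝓞 L}
    (hx : f.map (Int.castRingHom (𝓞 L)) = Lagrange.nodal Finset.univ x)
    {ψ : Gal(L/ℚ) →* Equiv.Perm ι} (hψ : ∀ (σ : Gal(L/ℚ)) a, σ • x a = x (ψ σ a)) (a : ι) :
    ∃ σ, ψ σ a ≠ a := by
  by_contra! hfix
  obtain ⟨n, hn⟩ := exists_intCast_eq_of_forall_smul_eq (y := x a) fun σ => by rw [hψ, hfix]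
  have heval := Lagrange.eval_nodal_at_node (v := x) (Finset.mem_univ a)
  rw [← hx, hn, eval_intCast_map, eq_intCast, Int.cast_id, Int.cast_eq_zero] at heval
  exact hroot n heval

theorem exists_smul_ne_of_not_isSquare {d : ℤ} (hd : ¬IsSquare d) {t : 𝓞 L} (ht : t ^ 2 = d) :
    ∃ σ : Gal(L/ℚ), σ • t ≠ t := by
  by_contra! hfix
  obtain ⟨n, rfl⟩ := exists_intCast_eq_of_forall_smul_eq hfix
  exact hd ⟨n, by rw [← sq]; exact_mod_cast ht.symm⟩

theorem nonempty_gal_mulEquiv_of_sq_eq {ℓ : ℕ} [Fact ℓ.Prime] (hℓ : ℓ ≠ 2)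
    {ψ : Gal(L/ℚ) →* Equiv.Perm (OnePoint (ZMod ℓ))} (hψ : Function.Injective ψ)
    (hmove : ∀ a, ∃ σ, ψ σ a ≠ a) (hunique : ∃ σ a, ∀ b, ψ σ b = b ↔ b = a) {d : ℤ}
    (hd : ¬IsSquare d) {t : 𝓞 L} (ht : t ^ 2 = d)
    (hχ : ∀ (σ : Gal(L/ℚ)) a b c, tripleChar a b c * σ • t =
      tripleChar (ψ σ a) (ψ σ b) (ψ σ c) * t) :
    Nonempty (Gal(L/ℚ) ≃* PGL(2, ZMod ℓ)) := by
  have ht0 : t ≠ 0 := by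
    rintro rfl
    have hd0 : d = 0 := by simpa using ht.symm
    exact hd (hd0 ▸ IsSquare.zero)
  refine nonempty_mulEquiv_PGL hℓ hψ (fun σ => ?_) ?_ hmove hunique
  · obtain ⟨ε, hε⟩ := smul_eq_intCast_mul_of_sq_eq ht σ
    refine ⟨ε, fun a b c => ?_⟩
    have hmul := hχ σ a b c
    rw [hε, ← mul_assoc] at hmul
    rw [mul_comm]
    exact_mod_cast (mul_right_cancel₀ ht0 hmul).symm
  · obtain ⟨σ, hσ⟩ := exists_smul_ne_of_not_isSquare hd ht
    refine ⟨σ, ∞, (0 : ZMod ℓ), (1 : ZMod ℓ), fun heq => hσ ?_⟩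
    have hmul := hχ σ ∞ (0 : ZMod ℓ) (1 : ZMod ℓ)
    rwa [heq, tripleChar_infty_zero_one, Int.cast_one, one_mul, one_mul] at hmul

end QuadraticSubfield

section Certificate

open Finset NumberField OnePoint MatrixGroups

theorem nonempty_gal_mulEquiv_of_modEq_moment {ℓ : ℕ} [Fact ℓ.Prime] (hℓ : ℓ ≠ 2) {f : ℤ[X]}
    (hf : f.Monic) (hdeg : f.natDegree = ℓ + 1) (hroot : ∀ n, f.eval n ≠ 0) {q : ℕ}
    (hq : q.Prime) {m : ℤ} (hqroot : ∀ n, (q : ℤ) ∣ f.eval n ↔ n ≡ m [ZMOD q])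
    (hqder : ¬(q : ℤ) ∣ f.derivative.eval m) {p N : ℕ} (hp : p.Prime) (hN : N ≠ 0)
    {r : OnePoint (ZMod ℓ) → ℤ} (hr : ∀ a, f.eval (r a) ≡ 0 [ZMOD (p ^ N : ℕ)])
    (hrp : ∀ a b, r a ≡ r b [ZMOD p] → a = b) {s d : ℤ} (hs : s ^ 2 ≡ d [ZMOD (p ^ N : ℕ)])
    (hd : ¬IsSquare d) (hpd : ¬(p : ℤ) ∣ 2 * d) {J : ℕ → ℕ → ℕ → ℤ}
    (hJ : ∀ i < f.natDegree, ∀ j < f.natDegree, ∀ k < f.natDegree,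
      J i j k ≡ moment r (fun a b c => s * tripleChar a b c) i j k [ZMOD (p ^ N : ℕ)])
    {B : ℕ} (hB : ∑ i ∈ range f.natDegree, (f.coeff i).natAbs * B ^ i < B ^ f.natDegree)
    (hbound : interpolantBound f.coeff f.natDegree J B ^ 2 +
      d.natAbs * evalCofactorBound f.coeff f.natDegree B ^ 6 < p ^ N)
    (L : Type*) [Field L] [NumberField L]
    [IsSplittingField ℚ L (f.map (Int.castRingHom ℚ))] :
    Nonempty (Gal(L/ℚ) ≃* PGL(2, ZMod ℓ)) := by
  classical
  have := Normal.of_isSplittingField (F := ℚ) (E := L) (f.map (Int.castRingHom ℚ))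
  have : IsGalois ℚ L := IsGalois.mk
  have hcard : f.natDegree = Fintype.card (OnePoint (ZMod ℓ)) := by
    rw [hdeg, ← Nat.card_eq_fintype_card]
    exact ((Finite.card_option (α := ZMod ℓ)).trans (by rw [Nat.card_zmod])).symm
  have hsplits : (f.map (Int.castRingHom L)).Splits := by
    rw [← map_intCast_map (algebraMap ℚ L)]
    exact IsSplittingField.splits L _
  obtain ⟨P, hP, hpP, -⟩ := exists_isMaximal_natCast_mem (L := L) hp
  obtain ⟨x, hx, hxr, hinj⟩ :=
    exists_map_eq_nodal_and_sub_intCast_mem_pow hf hsplits hcard hp hpP hN hr hrp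
  obtain ⟨ψ, hψx⟩ := exists_perm_smul_eq (G := Gal(L/ℚ))
    (fun a b hab => hinj a b (by rw [hab, sub_self]; exact P.zero_mem)) hx
  have hψ := injective_of_forall_smul_eq L hx hψx
  obtain ⟨t, ht, hχ⟩ := exists_sq_eq_and_forall_mul_smul_eq hf (by omega) hx hp hpP hN hinj hψ hψx
    hxr hs hpd tripleChar_eq_zero_or (fun π => tripleChar_apply_sq π.injective)
    ⟨∞, (0 : ZMod ℓ), (1 : ZMod ℓ), tripleChar_infty_zero_one⟩ hJ
    (norm_apply_le_of_map_eq_nodal hf hx hB) hbound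
  exact nonempty_gal_mulEquiv_of_sq_eq hℓ hψ (exists_apply_ne_of_forall_eval_ne_zero hroot hx hψx)
    (exists_apply_eq_self_iff_eq hx hψx hq hqroot hqder) hd ht hχ

end Certificate

section PackedMoment

open Finset

theorem sum_mul_pow_div_pow_mod {B n k : ℕ} {d : ℕ → ℕ} (hd : ∀ i < n, d i < B) (hk : k < n) :
    (∑ i ∈ range n, d i * B ^ i) / B ^ k % B = d k := by
  induction k generalizing n d with
  | zero =>
    obtain ⟨n, rfl⟩ := Nat.exists_eq_add_one.mpr hk
    simp only [sum_range_succ', pow_succ, pow_zero, Nat.div_one, mul_one, ← mul_assoc, ← sum_mul]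
    rw [Nat.mul_add_mod_self_right, Nat.mod_eq_of_lt (hd 0 hk)]
  | succ k ih =>
    obtain ⟨n, rfl⟩ := Nat.exists_eq_add_one.mpr (Nat.zero_lt_of_lt hk)
    have h0 : d 0 < B := hd 0 n.succ_pos
    simp only [sum_range_succ', pow_succ, pow_zero, mul_one, ← mul_assoc, ← sum_mul]
    rw [mul_comm (B ^ k), ← Nat.div_div_eq_div_mul, mul_comm _ B,
      Nat.mul_add_div (Nat.zero_lt_of_lt h0), Nat.div_eq_of_lt h0, add_zero]
    exact ih (fun i hi => hd (i + 1) (by lia)) (by lia)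

variable {ι : Type*} [Fintype ι] (r : ι → ℕ) (ω : ι → ι → ι → ℤ) (M B n : ℕ)

/-- The residue of the power `r a ^ k` modulo `M`. -/
def powMod (a : ι) (k : ℕ) : ℕ := r a ^ k % M

/-- The first `n` power residues of `r c`, as the digits of a number in base `B`. -/
def packedPow (c : ι) : ℕ := ∑ k ∈ range n, powMod r M c k * B ^ k

/-- The weighted sum of `packedPow` over the third index. -/
def packedMomentThird (a b : ι) : ℕ := ∑ c, (ω a b c % M).toNat * packedPow r M B n c

/-- The weighted sum of `packedPow` over the second and third index. -/
def packedMomentSecond (a : ι) (j : ℕ) : ℕ :=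
  ∑ b, packedMomentThird r ω M B n a b * powMod r M b j

/-- A number whose `k`-th digit in base `B` is congruent to `moment r ω i j k` modulo `M`. All `n`
moments with given `i` and `j` are obtained from a single sum over the triples of indices. -/
def packedMoment (i j : ℕ) : ℕ := ∑ a, packedMomentSecond r ω M B n a j * powMod r M a i

/-- The residue of `moment r ω i j k` modulo `M` of least absolute value, see
`balancedMoment_modEq_moment`. -/
def balancedMoment (i j k : ℕ) : ℤ := Int.bmod ((packedMoment r ω M B n i j / B ^ k % B : ℕ) : ℤ) M

variable {r ω M B n}

theorem packedMoment_eq (i j : ℕ) :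
    packedMoment r ω M B n i j = ∑ k ∈ range n, (∑ a, (∑ b, (∑ c,
      (ω a b c % M).toNat * powMod r M c k) * powMod r M b j) * powMod r M a i) * B ^ k := by
  have hswap (g : ι → ℕ → ℕ) (u : ι → ℕ) :
      ∑ a, (∑ k ∈ range n, g a k * B ^ k) * u a = ∑ k ∈ range n, (∑ a, g a k * u a) * B ^ k := by
    simp only [sum_mul, mul_right_comm _ (B ^ _)]
    exact sum_comm
  simp only [packedMoment, packedMomentSecond, packedMomentThird, packedPow, hswap,
    mul_comm (Int.toNat _)]

theorem sum_emod_mul_powMod_lt (hM : M ≠ 0) (hB : Fintype.card ι ^ 3 * M ^ 4 < B) (i j k : ℕ) :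
    ∑ a, (∑ b, (∑ c, (ω a b c % M).toNat * powMod r M c k) * powMod r M b j) * powMod r M a i <
      B := by
  have hpow (a : ι) (k : ℕ) : powMod r M a k ≤ M := (Nat.mod_lt _ (Nat.pos_of_ne_zero hM)).le
  have hweight (a b c : ι) : (ω a b c % M).toNat ≤ M := by
    have := Int.emod_lt_of_pos (ω a b c) (b := M) (by lia)
    lia
  calc _ ≤ ∑ _a : ι, (∑ _b : ι, (∑ _c : ι, M * M) * M) * M := by
        gcongr <;> apply_assumption
    _ = Fintype.card ι ^ 3 * M ^ 4 := by simp only [sum_const, card_univ, smul_eq_mul]; ring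
    _ < B := hB

theorem balancedMoment_modEq_moment (hM : M ≠ 0) (hB : Fintype.card ι ^ 3 * M ^ 4 < B) (i j : ℕ)
    {k : ℕ} (hk : k < n) :
    balancedMoment r ω M B n i j k ≡ moment (fun a => (r a : ℤ)) ω i j k [ZMOD M] := by
  have hpow (a : ι) (k : ℕ) : (powMod r M a k : ℤ) ≡ r a ^ k [ZMOD M] := by
    rw [powMod]; push_cast; exact Int.mod_modEq _ _
  have hweight (a b c : ι) : ((ω a b c % M).toNat : ℤ) ≡ ω a b c [ZMOD M] := by
    rw [Int.toNat_of_nonneg (Int.emod_nonneg _ (by exact_mod_cast hM))]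
    exact Int.mod_modEq _ _
  rw [balancedMoment, packedMoment_eq,
    sum_mul_pow_div_pow_mod (fun _ _ => sum_emod_mul_powMod_lt hM hB _ _ _) hk]
  refine (Int.bmod_emod ..).trans ?_
  push_cast
  exact Int.ModEq.sum fun a _ => .mul (Int.ModEq.sum fun b _ => .mul (Int.ModEq.sum fun c _ =>
    .mul (hweight a b c) (hpow c k)) (hpow b j)) (hpow a i)

end PackedMoment

section CoefficientList

open Finset

/-- The polynomial with the entries of `c` as coefficients, in increasing order of degree. -/
noncomputable def ofCoeffs (c : List ℤ) : ℤ[X] := ∑ i ∈ range c.length, C (c.getD i 0) * X ^ i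

/-- The value of `ofCoeffs c` at `x`, in a form that the kernel can evaluate. -/
def evalCoeffs (c : List ℤ) (x : ℤ) : ℤ := ∑ i ∈ range c.length, c.getD i 0 * x ^ i

/-- The value of the derivative of `ofCoeffs c` at `x`, in a form that the kernel can evaluate. -/
def evalDerivCoeffs (c : List ℤ) (x : ℤ) : ℤ :=
  ∑ i ∈ range c.length, c.getD i 0 * i * x ^ (i - 1)

variable (c : List ℤ) (x : ℤ)

theorem eval_ofCoeffs : (ofCoeffs c).eval x = evalCoeffs c x := by
  simp only [ofCoeffs, evalCoeffs, eval_finsetSum, eval_mul, eval_C, eval_pow, eval_X]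

theorem eval_derivative_ofCoeffs : (ofCoeffs c).derivative.eval x = evalDerivCoeffs c x := by
  simp only [ofCoeffs, evalDerivCoeffs, derivative_sum, derivative_C_mul_X_pow, eval_finsetSum,
    eval_mul, eval_C, eval_pow, eval_X]

theorem coeff_ofCoeffs : (ofCoeffs c).coeff = fun i => c.getD i 0 := by
  ext i
  simp only [ofCoeffs, finsetSum_coeff, coeff_C_mul_X_pow, Finset.sum_ite_eq, mem_range]
  split_ifs with hi
  · rfl
  · rw [List.getD_eq_default _ _ (not_lt.mp hi)]

theorem degree_ofCoeffs_lt : (ofCoeffs c).degree < c.length := by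
  rw [degree_lt_iff_coeff_zero]
  intro i hi
  rw [coeff_ofCoeffs]
  exact List.getD_eq_default _ _ hi

theorem eval_ofCoeffs_modEq (m : ℤ) :
    (ofCoeffs c).eval x ≡ evalCoeffs c (x % m) [ZMOD m] := by
  rw [← eval_ofCoeffs]
  exact Int.ModEq.symm <| Int.modEq_iff_dvd.mpr <|
    Int.dvd_self_sub_emod.trans (sub_dvd_eval_sub _ _ _)

/-- One step of Newton's method modulo `m` for the polynomial `ofCoeffs c`, together with the
inverse of its derivative, applied to a pair of approximations to a root and to that inverse. -/
def newtonStep (c : List ℤ) (m : ℕ) (y : ℤ × ℤ) : ℤ × ℤ :=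
  ((y.1 - y.2 * evalCoeffs c y.1) % m, y.2 * (2 - y.2 * evalDerivCoeffs c y.1) % m)

/-- The root modulo `m` of `ofCoeffs c` found by eight steps of Newton's method from the pair `y` of
approximations. The precisions of a root and of the inverse of the derivative there grow like
Fibonacci numbers, so that eight steps lift such a pair modulo `p` to a root modulo `p ^ 55`. -/
def newtonLift (c : List ℤ) (m : ℕ) (y : ℤ × ℤ) : ℕ := ((newtonStep c m)^[8] y).1.toNat

end CoefficientList

section ProjectivePolynomial

open Finset OnePoint

local instance {X : Type*} [DecidableEq X] : DecidableEq (OnePoint X) :=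
  inferInstanceAs (DecidableEq (Option X))

local instance : Fact (Nat.Prime 31) := ⟨by norm_num⟩

/-- The coefficients of `R`, in increasing order of degree. -/
def coeffsR : List ℤ :=
  [178725601175511, -1113936554991727, 3269911760551427, -5959749341609879, 7460752526582377,
   -6661579151098950, 4206562171750919, -1714511602191278, 250865100757790, 197719989210108,
   -162450534558477, 54285321863574, -3257558862543, -5273524311353, 2480836111912,
   -406418167694, -83774789980, 64357190741, -14790203106, -278789479, 1225662500, -344750256,
   12517459, 17190864, -4280108, 59489, 143499, -23560, -248, 558, -62, -4, 1]

/-- The roots of `R` modulo `198109 ^ 43`, labelled by the points of the projective line in such a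
way that the Galois group acts by fractional linear transformations. Each pair consists of a root
modulo `198109` and of the inverse of the derivative there. -/
def rootR : OnePoint (ZMod 31) → ℕ
  | ∞ => newtonLift coeffsR (198109 ^ 43) (1054, 197074)
  | (a : ZMod 31) => newtonLift coeffsR (198109 ^ 43) <|
    [(2783, 151534), (14104, 97772), (138768, 79223), (172769, 101183), (45030, 4905),
     (140408, 42061), (20457, 108028), (23708, 193566), (77667, 104865), (74748, 12511),
     (158392, 183476), (44611, 137428), (183473, 132422), (120681, 104363), (19583, 2124),
     (127828, 87789), (197115, 139271), (68611, 57329), (136384, 51102), (175997, 143492),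
     (109897, 127527), (81787, 177479), (123533, 22073), (86493, 135485), (164593, 7087),
     (31499, 186877), (18062, 18989), (102903, 115419), (126853, 13399), (138479, 140067),
     (43369, 93824)].getD a.val 0

/-- A square root of `-31` modulo `198109 ^ 43`. -/
def sqrtNeg31 : ℕ := newtonLift [31, 0, 1] (198109 ^ 43) (8061, 156440)

/-- The moments of `√-31 * tripleChar` at the roots of `R`. They are invariant under the Galois
group, hence rational integers, and small in comparison with the modulus. -/
def momentR : ℕ → ℕ → ℕ → ℤ :=
  balancedMoment rootR (fun a b c => sqrtNeg31 * tripleChar a b c) (198109 ^ 43) (2 ^ 3072) 32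

theorem map_ofCoeffs_coeffsR : (ofCoeffs coeffsR).map (Int.castRingHom ℚ) = R := by
  simp only [ofCoeffs, coeffsR, R, List.length_cons, List.length_nil, zero_add, Nat.reduceAdd,
    sum_range_succ, sum_range_zero, Polynomial.map_add, Polynomial.map_mul, Polynomial.map_pow,
    map_X, List.getD_cons_zero, List.getD_cons_succ, map_neg, map_ofNat, map_one,
    Polynomial.map_neg, Polynomial.map_ofNat, Polynomial.map_one]
  ring

theorem natDegree_ofCoeffs_coeffsR : (ofCoeffs coeffsR).natDegree = 32 :=
  natDegree_eq_of_degree_eq_some <| le_antisymm (Order.lt_succ_iff.mp (degree_ofCoeffs_lt _)) <|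
    le_degree_of_ne_zero (by simp [coeff_ofCoeffs, coeffsR])

theorem monic_ofCoeffs_coeffsR : (ofCoeffs coeffsR).Monic := by
  rw [Monic, leadingCoeff, natDegree_ofCoeffs_coeffsR, coeff_ofCoeffs]
  rfl

theorem eval_ofCoeffs_coeffsR_ne_zero (n : ℤ) : (ofCoeffs coeffsR).eval n ≠ 0 := by
  intro h
  have hmod := eval_ofCoeffs_modEq coeffsR n 2
  rw [h] at hmod
  rcases Int.emod_two_eq n with hn | hn <;> rw [hn] at hmod <;> revert hmod <;> decide +kernel

theorem dvd_eval_ofCoeffs_coeffsR_iff (n : ℤ) :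
    71 ∣ (ofCoeffs coeffsR).eval n ↔ n ≡ 64 [ZMOD 71] := by
  have hcheck : ∀ i ∈ Ico (0 : ℤ) 71, 71 ∣ evalCoeffs coeffsR i ↔ i = 64 := by decide +kernel
  rw [(eval_ofCoeffs_modEq coeffsR n 71).dvd_iff]
  exact hcheck _ (mem_Ico.mpr ⟨n.emod_nonneg (by norm_num), n.emod_lt_of_pos (by norm_num)⟩)

theorem not_dvd_eval_derivative_ofCoeffs_coeffsR :
    ¬71 ∣ (ofCoeffs coeffsR).derivative.eval 64 := by
  rw [eval_derivative_ofCoeffs]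
  decide +kernel

theorem sum_natAbs_coeffsR_mul_pow_lt :
    ∑ i ∈ range 32, (coeffsR.getD i 0).natAbs * 14 ^ i < 14 ^ 32 := by
  decide +kernel

set_option maxRecDepth 100000 in
theorem eval_rootR_modEq :
    ∀ a, (ofCoeffs coeffsR).eval (rootR a : ℤ) ≡ 0 [ZMOD (198109 ^ 43 : ℕ)] := by
  simp only [eval_ofCoeffs]
  decide +kernel

set_option maxRecDepth 100000 in
theorem eq_of_rootR_modEq :
    ∀ a b : OnePoint (ZMod 31), rootR a ≡ rootR b [ZMOD (198109 : ℕ)] → a = b := by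
  decide +kernel

set_option maxRecDepth 100000 in
theorem sqrtNeg31_sq_modEq : (sqrtNeg31 : ℤ) ^ 2 ≡ -31 [ZMOD (198109 ^ 43 : ℕ)] := by
  decide +kernel

theorem momentR_modEq_moment (i j : ℕ) {k : ℕ} (hk : k < 32) :
    momentR i j k ≡ moment (fun a => (rootR a : ℤ))
      (fun a b c => sqrtNeg31 * tripleChar a b c) i j k [ZMOD (198109 ^ 43 : ℕ)] :=
  balancedMoment_modEq_moment (by norm_num) (by decide +kernel) i j hk

set_option maxRecDepth 100000 in
theorem interpolantBound_momentR_lt :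
    interpolantBound (fun i => coeffsR.getD i 0) 32 momentR 14 ^ 2 +
      (-31 : ℤ).natAbs * evalCofactorBound (fun i => coeffsR.getD i 0) 32 14 ^ 6 < 198109 ^ 43 := by
  decide +kernel

end ProjectivePolynomial

theorem galoisGroup_R :
    Nonempty (R.Gal ≃*
      GL (Fin 2) (ZMod 31) ⧸ Subgroup.center (GL (Fin 2) (ZMod 31))) := by
  have : Fact (Nat.Prime 31) := ⟨by norm_num⟩
  have : IsSplittingField ℚ R.SplittingField ((ofCoeffs coeffsR).map (Int.castRingHom ℚ)) :=
    map_ofCoeffs_coeffsR.symm ▸ IsSplittingField.splittingField R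
  have : NumberField R.SplittingField := NumberField.mk
  refine nonempty_gal_mulEquiv_of_modEq_moment (ℓ := 31) (q := 71) (m := 64) (p := 198109)
    (N := 43) (r := fun a => rootR a) (s := sqrtNeg31) (d := -31) (J := momentR) (B := 14)
    (by norm_num) monic_ofCoeffs_coeffsR natDegree_ofCoeffs_coeffsR
    eval_ofCoeffs_coeffsR_ne_zero (by norm_num) dvd_eval_ofCoeffs_coeffsR_iff
    not_dvd_eval_derivative_ofCoeffs_coeffsR (by norm_num) (by norm_num) eval_rootR_modEq
    eq_of_rootR_modEq sqrtNeg31_sq_modEq (by decide) (by norm_num) ?_ ?_ ?_ R.SplittingField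
  · rw [natDegree_ofCoeffs_coeffsR]
    exact fun i _ j _ k hk => momentR_modEq_moment i j hk
  · rw [natDegree_ofCoeffs_coeffsR, coeff_ofCoeffs]
    exact sum_natAbs_coeffsR_mul_pow_lt
  · rw [natDegree_ofCoeffs_coeffsR, coeff_ofCoeffs]
    exact interpolantBound_momentR_lt
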